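/- Assume: (O1) a_{ij}(ω) ≥ 0 for all i ≠ j and all ω; (O2) ω ↦ max_{i,j} a_{ij}(ω) ∈ L₁(ℙ); and the strong positivity condition: there exist ē ∈ X⁺ with ‖ē‖ = 1 and a measurable ν : Ω → (0, ∞) with ω ↦ ln⁻ν(ω) in L₁(ℙ) such that U_ω(1)ē ≥ ν(ω)·ē componentwise for every ω ∈ Ω. Then the generalized principal Lyapunov exponent is finite; equivalently, the ℙ-almost-sure constant limit λ̃₁ := lim_{t→∞} (1/t) ln‖U_ω(t)‖ (which exists in [−∞, ∞)) satisfies λ̃₁ > −∞. -/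

import Mathlib

open MeasureTheory Matrix Filter

/-- `ln⁻ x = max (−ln x) 0`. -/
noncomputable def lnminus (x : ℝ) : ℝ := max (-Real.log x) 0

/-- The Euclidean norm on `Fin N → ℝ`. -/
noncomputable def enorm' {N : ℕ} (u : Fin N → ℝ) : ℝ := Real.sqrt (∑ i, (u i) ^ 2)

/-- The operator norm of a matrix with respect to the Euclidean norm. -/
noncomputable def eopNorm {N : ℕ} (M : Matrix (Fin N) (Fin N) ℝ) : ℝ :=
  sSup {c : ℝ | ∃ u : Fin N → ℝ, enorm' u ≤ 1 ∧ c = enorm' (M.mulVec u)}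

/-!
On matrices with nonnegative entries the largest column sum is a submultiplicative norm, so its
logarithm along the cocycle `U` is a subadditive process. The sum of the coordinates of a
nonnegative solution grows at a rate of at most `N` times the positive part of the largest entry of
`A`, which bounds this process from above by an additive one; iterating the strong positivity
inequality bounds it from below by the Birkhoff sums of `-ln⁻ ν`. Kingman's theorem then gives an
almost sure limit, which the lower bound keeps finite.
-/

section MaximalErgodic

variable {Ω : Type*} {T : Ω → Ω} {g : Ω → ℝ}

theorem partialSups_birkhoffSum_nonneg (N : ℕ) (ω : Ω) :
    0 ≤ partialSups (birkhoffSum T g) N ω := by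
  simpa using le_partialSups_of_le (birkhoffSum T g) N.zero_le ω

theorem partialSups_birkhoffSum_le (N : ℕ) (ω : Ω) :
    partialSups (birkhoffSum T g) N ω ≤
      {ω' | 0 < partialSups (birkhoffSum T g) N ω'}.indicator g ω +
        partialSups (birkhoffSum T g) N (T ω) := by
  by_cases hω : 0 < partialSups (birkhoffSum T g) N ω
  · rw [Set.indicator_of_mem (Set.mem_ofPred_eq ▸ hω)]
    obtain ⟨n, hnN, hn⟩ := exists_partialSups_eq (birkhoffSum T g · ω) N
    rw [Pi.partialSups_apply, hn] at hω ⊢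
    obtain _ | n := n
    · simp at hω
    · rw [birkhoffSum_succ']
      gcongr
      exact le_partialSups_of_le (birkhoffSum T g) (n.le_succ.trans hnN) (T ω)
  · rw [Set.indicator_of_notMem (Set.mem_ofPred_eq ▸ hω), zero_add]
    exact (not_lt.1 hω).trans (partialSups_birkhoffSum_nonneg N _)

variable [MeasurableSpace Ω] {μ : Measure Ω}

theorem integral_comp_of_measurePreserving (hT : MeasurePreserving T μ μ)
    (hg : AEStronglyMeasurable g μ) : ∫ ω, g (T ω) ∂μ = ∫ ω, g ω ∂μ := by
  rw [← integral_map hT.measurable.aemeasurable (hT.map_eq.symm ▸ hg), hT.map_eq]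

theorem integrable_birkhoffSum (hT : MeasurePreserving T μ μ) (hg : Integrable g μ) (n : ℕ) :
    Integrable (birkhoffSum T g n) μ :=
  integrable_finsetSum _ fun k _ => (hT.iterate k).integrable_comp_of_integrable hg

theorem integral_birkhoffSum (hT : MeasurePreserving T μ μ) (hg : Integrable g μ) (n : ℕ) :
    ∫ ω, birkhoffSum T g n ω ∂μ = n * ∫ ω, g ω ∂μ := by
  calc ∫ ω, birkhoffSum T g n ω ∂μ
      = ∑ k ∈ Finset.range n, ∫ ω, g (T^[k] ω) ∂μ :=
        integral_finsetSum _ fun k _ => (hT.iterate k).integrable_comp_of_integrable hg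
    _ = n * ∫ ω, g ω ∂μ := by
        simp [integral_comp_of_measurePreserving (hT.iterate _) hg.1]

theorem integrable_partialSups_birkhoffSum (hT : MeasurePreserving T μ μ) (hg : Integrable g μ)
    (N : ℕ) : Integrable (partialSups (birkhoffSum T g) N) μ := by
  induction N with
  | zero => simp
  | succ N ih => simpa only [partialSups_add_one] using ih.sup (integrable_birkhoffSum hT hg _)

-- Garsia's argument: integrate `partialSups_birkhoffSum_le` and use the invariance of `μ`.
theorem integral_nonneg_of_ae_exists_birkhoffSum_pos (hT : MeasurePreserving T μ μ)
    (hg : Integrable g μ) (hpos : ∀ᵐ ω ∂μ, ∃ n, 0 < birkhoffSum T g n ω) :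
    0 ≤ ∫ ω, g ω ∂μ := by
  set M := partialSups (birkhoffSum T g)
  have hM (N : ℕ) : Integrable (M N) μ := integrable_partialSups_birkhoffSum hT hg N
  have hMT (N : ℕ) : Integrable (fun ω => M N (T ω)) μ := hT.integrable_comp_of_integrable (hM N)
  have hgM (N : ℕ) : Integrable ({ω | 0 < M N ω}.indicator g) μ :=
    hg.indicator₀ (nullMeasurableSet_lt aemeasurable_const (hM N).aemeasurable)
  have integral_indicator_nonneg (N : ℕ) : 0 ≤ ∫ ω, {ω' | 0 < M N ω'}.indicator g ω ∂μ := by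
    have hle := integral_mono (hM N) ((hgM N).add (hMT N)) (partialSups_birkhoffSum_le N)
    rw [integral_add' (hgM N) (hMT N), integral_comp_of_measurePreserving hT (hM N).1] at hle
    linarith
  have hlim : Tendsto (fun N => ∫ ω, {ω' | 0 < M N ω'}.indicator g ω ∂μ) atTop
      (nhds (∫ ω, g ω ∂μ)) := by
    refine tendsto_integral_of_dominated_convergence (fun ω => ‖g ω‖)
      (fun N => (hgM N).1) hg.norm
      (fun N => .of_forall fun ω => norm_indicator_le_norm_self g ω) ?_
    filter_upwards [hpos] with ω ⟨n, hn⟩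
    refine tendsto_const_nhds.congr' ?_
    filter_upwards [eventually_ge_atTop n] with N hN
    have hNω : 0 < M N ω := hn.trans_le (le_partialSups_of_le (birkhoffSum T g) hN ω)
    exact (Set.indicator_of_mem (Set.mem_ofPred_eq ▸ hNω) g).symm
  exact ge_of_tendsto' hlim integral_indicator_nonneg

end MaximalErgodic

section Subadditive

/-- Nonpositive subadditive processes over the discrete dynamical system generated by `T`, the
setting of Kingman's theorem; the general integrable case reduces to this one by subtracting a
Birkhoff sum. -/
structure IsNonposSubadditive {Ω : Type*} (T : Ω → Ω) (Z : ℕ → Ω → ℝ) : Prop where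
  nonpos (n : ℕ) (ω : Ω) : Z n ω ≤ 0
  add_le (m n : ℕ) (ω : Ω) : Z (m + n) ω ≤ Z m ω + Z n (T^[m] ω)

namespace IsNonposSubadditive

variable {Ω : Type*} {T : Ω → Ω} {Z : ℕ → Ω → ℝ}

theorem antitone (hZ : IsNonposSubadditive T Z) (ω : Ω) : Antitone (Z · ω) := by
  intro m n hmn
  obtain ⟨k, rfl⟩ := Nat.exists_eq_add_of_le hmn
  linarith [hZ.add_le m k ω, hZ.nonpos k (T^[m] ω)]

theorem mul_le_birkhoffSum (hZ : IsNonposSubadditive T Z) (m n : ℕ) (ω : Ω) :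
    Z (m * n) ω ≤ birkhoffSum T^[m] (Z m) n ω := by
  induction n with
  | zero => simpa using hZ.nonpos 0 ω
  | succ n ih =>
    rw [birkhoffSum_succ, ← Function.iterate_mul, Nat.mul_succ]
    linarith [hZ.add_le (m * n) m ω]

-- The Katznelson–Weiss tiling: cut `[0, K)` greedily into blocks, of a length `n ≤ N` with
-- `Z n ≤ n * c` at the points outside `B` and of length one at the points of `B`.
theorem le_mul_sub_birkhoffSum (hZ : IsNonposSubadditive T Z) {c : ℝ} (hc : c ≤ 0) {N : ℕ}
    {B : Set Ω} (hB : ∀ ω ∉ B, ∃ n, 1 ≤ n ∧ n ≤ N ∧ Z n ω ≤ n * c) (K : ℕ) (ω : Ω) :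
    Z K ω ≤ c * (K - N - birkhoffSum T (B.indicator 1) K ω) := by
  have visits_nonneg (n : ℕ) (ω : Ω) : 0 ≤ birkhoffSum T (B.indicator (1 : Ω → ℝ)) n ω :=
    Finset.sum_nonneg fun _ _ => Set.indicator_nonneg (fun _ _ => zero_le_one) _
  induction K using Nat.strong_induction_on generalizing ω with
  | _ K ih =>
  obtain hKN | hNK := le_or_gt K N
  · have hKN' : (K : ℝ) ≤ N := mod_cast hKN
    exact (hZ.nonpos K ω).trans
      (mul_nonneg_of_nonpos_of_nonpos hc (by linarith [visits_nonneg K ω]))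
  by_cases hω : ω ∈ B
  · obtain ⟨J, rfl⟩ := Nat.exists_eq_add_of_lt (N.zero_le.trans_lt hNK)
    have hJ := ih J (by lia) (T ω)
    rw [zero_add, birkhoffSum_succ', Set.indicator_of_mem hω, Pi.one_apply, add_comm J]
    push_cast
    have hstep : Z (1 + J) ω ≤ Z 1 ω + Z J (T ω) := hZ.add_le 1 J ω
    linarith [hZ.nonpos 1 ω]
  · obtain ⟨n, hn1, hnN, hn⟩ := hB ω hω
    obtain ⟨J, rfl⟩ := Nat.exists_eq_add_of_le (hnN.trans hNK.le)
    have hJ := ih J (by lia) (T^[n] ω)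
    have := mul_nonneg_of_nonpos_of_nonpos hc (neg_nonpos.2 (visits_nonneg n ω))
    rw [birkhoffSum_add]
    push_cast
    linarith [hZ.add_le n J ω]

variable [MeasurableSpace Ω] {μ : Measure Ω} [IsProbabilityMeasure μ]

theorem integral_le_mul_sub_measureReal (hZ : IsNonposSubadditive T Z)
    (hT : MeasurePreserving T μ μ) (hZint : ∀ n, Integrable (Z n) μ) {c : ℝ} (hc : c ≤ 0) {N : ℕ}
    {B : Set Ω} (hBmeas : MeasurableSet B)
    (hB : ∀ ω ∉ B, ∃ n, 1 ≤ n ∧ n ≤ N ∧ Z n ω ≤ n * c) (K : ℕ) :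
    ∫ ω, Z K ω ∂μ ≤ c * (K - N - K * μ.real B) := by
  have hBint : Integrable (B.indicator (1 : Ω → ℝ)) μ := (integrable_const 1).indicator hBmeas
  have hsum := integrable_birkhoffSum hT hBint K
  calc ∫ ω, Z K ω ∂μ
      ≤ ∫ ω, c * (K - N - birkhoffSum T (B.indicator 1) K ω) ∂μ :=
        integral_mono (hZint K) (((integrable_const _).sub hsum).const_mul c)
          (hZ.le_mul_sub_birkhoffSum hc hB K)
    _ = c * (K - N - K * μ.real B) := by
        rw [integral_const_mul, integral_sub (integrable_const _) hsum,
          integral_birkhoffSum hT hBint, integral_indicator_one hBmeas]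
        simp

theorem exists_measureReal_lt (hZmeas : ∀ n, Measurable (Z n)) {c : ℝ}
    (hlt : ∀ᵐ ω ∂μ, ∃ n, 1 ≤ n ∧ Z n ω ≤ n * c) {ε : ℝ} (hε : 0 < ε) :
    ∃ N, ∃ B : Set Ω, MeasurableSet B ∧ μ.real B < ε ∧
      ∀ ω ∉ B, ∃ n, 1 ≤ n ∧ n ≤ N ∧ Z n ω ≤ n * c := by
  let B (N : ℕ) : Set Ω := ⋂ n ∈ Finset.Icc 1 N, {ω | n * c < Z n ω}
  have hBmeas (N : ℕ) : MeasurableSet (B N) :=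
    Finset.measurableSet_biInter _ fun n _ => measurableSet_lt measurable_const (hZmeas n)
  have hB : Antitone B := fun M N hMN =>
    Set.biInter_subset_biInter_left (Finset.Icc_subset_Icc_right hMN)
  have hnull : μ (⋂ N, B N) = 0 := by
    refine measure_mono_null (fun ω hω => ?_) hlt
    rintro ⟨n, hn1, hn⟩
    simp only [B, Set.mem_iInter] at hω
    exact hn.not_gt (hω n n (Finset.mem_Icc.2 ⟨hn1, le_rfl⟩))
  have hlim := tendsto_measure_iInter_atTop (fun N => (hBmeas N).nullMeasurableSet) hB
    ⟨0, measure_ne_top μ _⟩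
  rw [hnull] at hlim
  obtain ⟨N, hN⟩ := (((ENNReal.tendsto_toReal ENNReal.zero_ne_top).comp hlim).eventually_lt_const
    hε).exists
  refine ⟨N, B N, hBmeas N, hN, fun ω hω => ?_⟩
  simpa [B, and_assoc] using hω

theorem exists_integral_lt (hZ : IsNonposSubadditive T Z) (hT : MeasurePreserving T μ μ)
    (hZmeas : ∀ n, Measurable (Z n)) (hZint : ∀ n, Integrable (Z n) μ) {c c' : ℝ} (hcc' : c < c')
    (hlt : ∀ᵐ ω ∂μ, ∃ n, 1 ≤ n ∧ Z n ω ≤ n * c) :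
    ∃ K, 1 ≤ K ∧ ∫ ω, Z K ω ∂μ < K * c' := by
  obtain hc' | hc' := lt_or_ge 0 c'
  · exact ⟨1, le_rfl, by simpa using (integral_nonpos (hZ.nonpos 1)).trans_lt hc'⟩
  have hc : c < 0 := hcc'.trans_le hc'
  have hgap : 0 < (c' - c) / (-c) := div_pos (by linarith) (by linarith)
  obtain ⟨N, B, hBmeas, hBε, hB⟩ := exists_measureReal_lt hZmeas hlt (half_pos hgap)
  obtain ⟨K, hK⟩ := exists_nat_gt (N / ((c' - c) / (-c) / 2))
  have hNK : N < K * ((c' - c) / (-c) / 2) := (div_lt_iff₀ (half_pos hgap)).1 hK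
  have hK1 : 1 ≤ K := Nat.one_le_iff_ne_zero.2 fun h => by
    simp only [h, CharP.cast_eq_zero, zero_mul] at hNK
    exact hNK.not_ge N.cast_nonneg
  refine ⟨K, hK1, (hZ.integral_le_mul_sub_measureReal hT hZint hc.le hBmeas hB K).trans_lt ?_⟩
  have hdefect : N + K * μ.real B < K * ((c' - c) / (-c)) := by
    linarith [mul_le_mul_of_nonneg_left hBε.le (Nat.cast_nonneg (α := ℝ) K)]
  calc c * (K - N - K * μ.real B) = K * c + (-c) * (N + K * μ.real B) := by ring
    _ < K * c + (-c) * (K * ((c' - c) / (-c))) := by gcongr; linarith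
    _ = K * c' := by field_simp [hc.ne]; ring

theorem mul_le_integral (hZ : IsNonposSubadditive T Z) (hT : MeasurePreserving T μ μ)
    (hZint : ∀ n, Integrable (Z n) μ) {c c' : ℝ} (hcc' : c < c')
    (hlt : ∀ᵐ ω ∂μ, ∃ᶠ n : ℕ in atTop, n * c' < Z n ω) {m : ℕ} (hm : 1 ≤ m) :
    m * c ≤ ∫ ω, Z m ω ∂μ := by
  have hpos : ∀ᵐ ω ∂μ, ∃ q, 0 < birkhoffSum T^[m] (fun ω => Z m ω - m * c) q ω := by
    filter_upwards [hlt] with ω hω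
    obtain ⟨a, ha⟩ := exists_nat_gt (-c' / (c' - c))
    obtain ⟨n, hn, hnm⟩ := (hω.and_eventually (eventually_ge_atTop (m * a))).exists
    refine ⟨n / m, ?_⟩
    have haq : (a : ℝ) ≤ (n / m : ℕ) := by
      exact_mod_cast (Nat.le_div_iff_mul_le hm).2 (mul_comm m a ▸ hnm)
    have hq : 0 < (n / m : ℕ) * (c' - c) + c' := by
      linarith [(div_lt_iff₀ (sub_pos.2 hcc')).1 (ha.trans_le haq)]
    have hc' : c' < 0 := neg_of_mul_neg_right (hn.trans_le (hZ.nonpos n ω)) n.cast_nonneg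
    have hnq : (n : ℝ) < m * (n / m : ℕ) + m := by
      exact_mod_cast (Nat.div_add_mod n m) ▸ Nat.add_lt_add_left (Nat.mod_lt n hm) _
    calc (0 : ℝ) < m * ((n / m : ℕ) * (c' - c) + c') := by positivity
      _ = (m * (n / m : ℕ) + m) * c' - (n / m : ℕ) * (m * c) := by ring
      _ ≤ n * c' - (n / m : ℕ) * (m * c) :=
        sub_le_sub_right (mul_le_mul_of_nonpos_right hnq.le hc'.le) _
      _ < Z (m * (n / m)) ω - (n / m : ℕ) * (m * c) :=
        sub_lt_sub_right (hn.trans_le (hZ.antitone ω (Nat.mul_div_le n m))) _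
      _ ≤ birkhoffSum T^[m] (Z m) (n / m) ω - (n / m : ℕ) * (m * c) :=
        sub_le_sub_right (hZ.mul_le_birkhoffSum m (n / m) ω) _
      _ = birkhoffSum T^[m] (fun ω => Z m ω - m * c) (n / m) ω := by
        simp [birkhoffSum, Finset.sum_sub_distrib]
  have hint := integral_nonneg_of_ae_exists_birkhoffSum_pos (hT.iterate m)
    ((hZint m).sub (integrable_const (m * c))) hpos
  rw [integral_sub' (hZint m) (integrable_const _)] at hint
  simpa using hint

theorem exists_integral_lt_of_liminf_lt (hZ : IsNonposSubadditive T Z)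
    (hT : MeasurePreserving T μ μ) (hZmeas : ∀ n, Measurable (Z n))
    (hZint : ∀ n, Integrable (Z n) μ) {a : EReal} {c : ℝ} (hac : a < c)
    (ha : ∀ᵐ ω ∂μ, liminf (fun n => ((Z n ω / n : ℝ) : EReal)) atTop = a) :
    ∃ K : ℕ, 1 ≤ K ∧ ∫ ω, Z K ω ∂μ < K * c := by
  obtain ⟨c₁, hac₁, hc₁c⟩ := EReal.lt_iff_exists_real_btwn.1 hac
  refine hZ.exists_integral_lt hT hZmeas hZint (EReal.coe_lt_coe_iff.1 hc₁c) ?_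
  filter_upwards [ha] with ω hω
  obtain ⟨n, hn, hn1⟩ := ((frequently_lt_of_liminf_lt (by isBoundedDefault)
    (hω.trans_lt hac₁)).and_eventually (eventually_ge_atTop 1)).exists
  have hlt := (div_lt_iff₀' (by positivity)).1 (EReal.coe_lt_coe_iff.1 hn)
  exact ⟨n, hn1, hlt.le⟩

theorem mul_le_integral_of_lt_limsup (hZ : IsNonposSubadditive T Z)
    (hT : MeasurePreserving T μ μ) (hZint : ∀ n, Integrable (Z n) μ) {b : EReal} {c : ℝ}
    (hcb : c < b) (hb : ∀ᵐ ω ∂μ, limsup (fun n => ((Z n ω / n : ℝ) : EReal)) atTop = b)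
    {m : ℕ} (hm : 1 ≤ m) : m * c ≤ ∫ ω, Z m ω ∂μ := by
  obtain ⟨c₁, hcc₁, hc₁b⟩ := EReal.lt_iff_exists_real_btwn.1 hcb
  refine hZ.mul_le_integral hT hZint (EReal.coe_lt_coe_iff.1 hcc₁) ?_ hm
  filter_upwards [hb] with ω hω
  refine ((frequently_lt_of_lt_limsup (by isBoundedDefault)
    (hc₁b.trans_eq hω.symm)).and_eventually (eventually_ge_atTop 1)).mono fun n ⟨hn, hn1⟩ => ?_
  exact (lt_div_iff₀' (by positivity)).1 (EReal.coe_lt_coe_iff.1 hn)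

-- Only the constancy of the two limits is left to the ergodicity of the system.
theorem ae_tendsto_div (hZ : IsNonposSubadditive T Z) (hT : MeasurePreserving T μ μ)
    (hZmeas : ∀ n, Measurable (Z n)) (hZint : ∀ n, Integrable (Z n) μ) {C : ℝ}
    (hC : ∀ n, n * C ≤ ∫ ω, Z n ω ∂μ) {a b : EReal}
    (ha : ∀ᵐ ω ∂μ, liminf (fun n => ((Z n ω / n : ℝ) : EReal)) atTop = a)
    (hb : ∀ᵐ ω ∂μ, limsup (fun n => ((Z n ω / n : ℝ) : EReal)) atTop = b) :
    ∃ l : ℝ, ∀ᵐ ω ∂μ, Tendsto (fun n : ℕ => Z n ω / n) atTop (nhds l) := by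
  obtain ⟨ω, hωa, hωb⟩ := (ha.and hb).exists
  have hab : a = b := by
    refine le_antisymm (hωa ▸ hωb ▸ liminf_le_limsup) (le_of_not_gt fun hlt => ?_)
    obtain ⟨c, hac, hcb⟩ := EReal.lt_iff_exists_real_btwn.1 hlt
    obtain ⟨K, hK1, hK⟩ := hZ.exists_integral_lt_of_liminf_lt hT hZmeas hZint hac ha
    exact hK.not_ge (hZ.mul_le_integral_of_lt_limsup hT hZint hcb hb hK1)
  have hCa : C ≤ a := by
    refine le_of_not_gt fun hlt => ?_
    obtain ⟨K, -, hK⟩ := hZ.exists_integral_lt_of_liminf_lt hT hZmeas hZint hlt ha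
    exact hK.not_ge (hC K)
  have ha0 : a ≤ 0 := hωa ▸ liminf_le_of_frequently_le' (.of_forall fun n => by
    exact_mod_cast div_nonpos_of_nonpos_of_nonneg (hZ.nonpos n ω) n.cast_nonneg)
  lift a to ℝ using ⟨fun h => by simp [h] at ha0, fun h => by simp [h] at hCa⟩
  refine ⟨a, ?_⟩
  filter_upwards [ha, hb] with ω hωa hωb
  exact EReal.tendsto_coe.1 (tendsto_of_liminf_eq_limsup hωa (hωb.trans hab.symm))

end IsNonposSubadditive

end Subadditive

section Flow

/-- Ergodic measure-preserving flows with time `ℝ`. Joint measurability in time and space is not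
part of the notion. -/
structure IsErgodicFlow {Ω : Type*} [MeasurableSpace Ω] (θ : ℝ → Ω → Ω) (μ : Measure Ω) :
    Prop where
  zero : θ 0 = id
  add (s t : ℝ) : θ (s + t) = θ s ∘ θ t
  measurePreserving (t : ℝ) : MeasurePreserving (θ t) μ μ
  measure_eq_zero_or_one (F : Set Ω) :
    MeasurableSet F → (∀ t, θ t ⁻¹' F = F) → μ F = 0 ∨ μ F = 1

/-- Subadditivity of a real-time process over the flow `θ`, imposed at nonnegative times only. -/
def IsSubadditiveAlong {Ω : Type*} (θ : ℝ → Ω → Ω) (X : ℝ → Ω → ℝ) : Prop :=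
  ∀ s t, 0 ≤ s → 0 ≤ t → ∀ ω, X (s + t) ω ≤ X s ω + X t (θ s ω)

theorem IsSubadditiveAlong.antitoneOn {Ω : Type*} {θ : ℝ → Ω → Ω} {X : ℝ → Ω → ℝ}
    (hX : IsSubadditiveAlong θ X) (hX0 : ∀ t, 0 ≤ t → ∀ ω, X t ω ≤ 0) (ω : Ω) :
    AntitoneOn (X · ω) (Set.Ici 0) := fun s hs t _ hst => by
  have h := hX s (t - s) hs (sub_nonneg.2 hst) ω
  rw [add_sub_cancel] at h
  exact h.trans (add_le_of_nonpos_right (hX0 _ (sub_nonneg.2 hst) _))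

theorem tendsto_div_of_antitoneOn {f : ℝ → ℝ} {l : ℝ} (hf : AntitoneOn f (Set.Ici 0))
    (hl : Tendsto (fun n : ℕ => f n / n) atTop (nhds l)) :
    Tendsto (fun t => f t / t) atTop (nhds l) := by
  have hceil := (hl.comp tendsto_nat_ceil_atTop).mul (tendsto_nat_ceil_div_atTop (R := ℝ))
  have hfloor := (hl.comp tendsto_nat_floor_atTop).mul (tendsto_nat_floor_div_atTop (R := ℝ))
  rw [mul_one] at hceil hfloor
  refine tendsto_of_tendsto_of_tendsto_of_le_of_le' hceil hfloor ?_ ?_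
  · filter_upwards [eventually_gt_atTop 0] with t ht
    have hne : ((⌈t⌉₊ : ℕ) : ℝ) ≠ 0 := by simpa using ht
    rw [Function.comp_apply, div_mul_div_cancel₀ hne]
    exact div_le_div_of_nonneg_right
      (hf ht.le (Set.mem_Ici.2 (Nat.cast_nonneg _)) (Nat.le_ceil t)) ht.le
  · filter_upwards [eventually_ge_atTop 1] with t ht
    have hne : ((⌊t⌋₊ : ℕ) : ℝ) ≠ 0 := by simpa using ht
    have ht0 : (0 : ℝ) ≤ t := zero_le_one.trans ht
    rw [Function.comp_apply, div_mul_div_cancel₀ hne]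
    exact div_le_div_of_nonneg_right
      (hf (Set.mem_Ici.2 (Nat.cast_nonneg _)) ht0 (Nat.floor_le ht0)) ht0

theorem tendsto_mul_add_div (c : ℝ) (p : ℕ) :
    Tendsto (fun n : ℕ => c * (n + p : ℕ) / n) atTop (nhds c) := by
  have hp : Tendsto (fun n : ℕ => c + c * p / n) atTop (nhds (c + 0)) :=
    tendsto_const_nhds.add (tendsto_const_div_atTop_nhds_zero_nat _)
  rw [add_zero] at hp
  refine hp.congr' ?_
  filter_upwards [eventually_ne_atTop 0] with n hn
  push_cast
  field_simp

theorem eventually_lt_div_of_shift_le {z w : ℕ → ℝ} {p : ℕ} (h : ∀ n, z (n + p) ≤ w n) {c c' : ℝ}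
    (hcc' : c < c') : ∀ᶠ n : ℕ in atTop,
      ((c' : EReal) < (z (n + p) / (n + p : ℕ) : ℝ)) → (c : EReal) ≤ (w n / n : ℝ) := by
  filter_upwards [(tendsto_mul_add_div c' p).eventually_const_lt hcc', eventually_gt_atTop 0]
    with n hn hn0 hz
  have hz' := (lt_div_iff₀ (by positivity)).1 (EReal.coe_lt_coe_iff.1 hz)
  rw [EReal.coe_le_coe_iff]
  exact hn.le.trans (div_le_div_of_nonneg_right (hz'.le.trans (h n)) n.cast_nonneg)

theorem liminf_div_le_of_shift_le {z w : ℕ → ℝ} {p : ℕ} (h : ∀ n, z (n + p) ≤ w n) :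
    liminf (fun n => ((z n / n : ℝ) : EReal)) atTop ≤
      liminf (fun n => ((w n / n : ℝ) : EReal)) atTop := by
  rw [← liminf_nat_add _ p]
  refine EReal.ge_of_forall_gt_iff_ge.1 fun c hc => ?_
  obtain ⟨c', hcc', hc'⟩ := EReal.lt_iff_exists_real_btwn.1 hc
  refine le_liminf_of_le ⟨⊤, by simp⟩ ?_
  filter_upwards [eventually_lt_of_lt_liminf hc',
    eventually_lt_div_of_shift_le h (EReal.coe_lt_coe_iff.1 hcc')] with n hn himp using himp hn

theorem limsup_div_le_of_shift_le {z w : ℕ → ℝ} {p : ℕ} (h : ∀ n, z (n + p) ≤ w n) :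
    limsup (fun n => ((z n / n : ℝ) : EReal)) atTop ≤
      limsup (fun n => ((w n / n : ℝ) : EReal)) atTop := by
  rw [← limsup_nat_add _ p]
  refine EReal.ge_of_forall_gt_iff_ge.1 fun c hc => ?_
  obtain ⟨c', hcc', hc'⟩ := EReal.lt_iff_exists_real_btwn.1 hc
  refine le_limsup_of_frequently_le ?_
  exact ((frequently_lt_of_lt_limsup (by isBoundedDefault) hc').and_eventually
    (eventually_lt_div_of_shift_le h (EReal.coe_lt_coe_iff.1 hcc'))).mono fun n hn => hn.2 hn.1

namespace IsErgodicFlow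

variable {Ω : Type*} [MeasurableSpace Ω] {θ : ℝ → Ω → Ω} {μ : Measure Ω}

theorem iterate (hθ : IsErgodicFlow θ μ) (a : ℝ) (k : ℕ) : (θ a)^[k] = θ (k * a) := by
  induction k with
  | zero => simp [hθ.zero]
  | succ k ih => rw [Function.iterate_succ', ih, ← hθ.add, Nat.cast_succ, add_one_mul, add_comm]

theorem measure_eq_zero_or_one_of_forward (hθ : IsErgodicFlow θ μ) {F : Set Ω}
    (hF : MeasurableSet F) (hmaps : ∀ s, 0 ≤ s → Set.MapsTo (θ s) F F) : μ F = 0 ∨ μ F = 1 := by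
  have hle {a b : ℝ} (hab : a ≤ b) : θ a ⁻¹' F ⊆ θ b ⁻¹' F := fun ω hω => by
    have hb : θ b ω = θ (b - a) (θ a ω) := by
      rw [← Function.comp_apply (f := θ (b - a)), ← hθ.add, sub_add_cancel]
    exact Set.mem_preimage.2 (hb ▸ hmaps (b - a) (sub_nonneg.2 hab) hω)
  have hmono : Monotone fun n : ℕ => θ n ⁻¹' F := fun a b hab => hle (Nat.cast_le.2 hab)
  have hμ : μ (⋃ n : ℕ, θ n ⁻¹' F) = μ F := by
    refine tendsto_nhds_unique (tendsto_measure_iUnion_atTop hmono)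
      (tendsto_const_nhds.congr fun n => ?_)
    exact ((hθ.measurePreserving n).measure_preimage hF.nullMeasurableSet).symm
  rw [← hμ]
  refine hθ.measure_eq_zero_or_one _
    (.iUnion fun n => (hθ.measurePreserving n).measurable hF) fun t => ?_
  simp only [Set.preimage_iUnion, ← Set.preimage_comp, ← hθ.add]
  refine subset_antisymm (Set.iUnion_subset fun n => ?_) (Set.iUnion_subset fun n => ?_)
  · obtain ⟨m, hm⟩ := exists_nat_ge (n + t)
    exact (hle hm).trans (Set.subset_iUnion (fun k : ℕ => θ k ⁻¹' F) m)
  · obtain ⟨m, hm⟩ := exists_nat_ge (n - t)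
    exact (hle (by linarith)).trans (Set.subset_iUnion (fun k : ℕ => θ (k + t) ⁻¹' F) m)

theorem exists_ae_eq_const [IsProbabilityMeasure μ] (hθ : IsErgodicFlow θ μ) {Y : Type*}
    [LinearOrder Y] [TopologicalSpace Y] [OrderTopology Y] [SecondCountableTopology Y]
    [MeasurableSpace Y] [OpensMeasurableSpace Y] {f : Ω → Y} (hf : Measurable f)
    (hmono : ∀ s, 0 ≤ s → ∀ ω, f ω ≤ f (θ s ω)) : ∃ a, ∀ᵐ ω ∂μ, f ω = a := by
  have : Nonempty Y := (nonempty_of_isProbabilityMeasure μ).map f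
  have := HasCountableSeparatingOn.range_Ioi (X := Y) (s := Set.univ)
  refine exists_eventuallyEq_const_of_forall_separating (· ∈ Set.range Set.Ioi) ?_
  rintro _ ⟨c, rfl⟩
  have hfc : MeasurableSet (f ⁻¹' Set.Ioi c) := hf measurableSet_Ioi
  refine (hθ.measure_eq_zero_or_one_of_forward hfc fun s hs ω hω =>
    lt_of_lt_of_le hω (hmono s hs ω)).symm.imp (mem_ae_iff_prob_eq_one hfc).2
    measure_eq_zero_iff_ae_notMem.1

variable [IsProbabilityMeasure μ] {X : ℝ → Ω → ℝ}

theorem exists_ae_tendsto_nat_div (hθ : IsErgodicFlow θ μ)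
    (hX : IsSubadditiveAlong θ X) (hX0 : ∀ t, 0 ≤ t → ∀ ω, X t ω ≤ 0)
    (hXmeas : ∀ n : ℕ, Measurable (X n)) (hXint : ∀ n : ℕ, Integrable (X n) μ) {C : ℝ}
    (hC : ∀ n : ℕ, n * C ≤ ∫ ω, X n ω ∂μ) :
    ∃ l : ℝ, ∀ᵐ ω ∂μ, Tendsto (fun n : ℕ => X n ω / n) atTop (nhds l) := by
  have shift (s : ℝ) (hs : 0 ≤ s) (ω : Ω) (n : ℕ) : X (n + ⌈s⌉₊ : ℕ) ω ≤ X n (θ s ω) := by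
    have hle : s + n ≤ (n + ⌈s⌉₊ : ℕ) := by push_cast; linarith [Nat.le_ceil s]
    have hanti := hX.antitoneOn hX0 ω (add_nonneg hs n.cast_nonneg)
      (Set.mem_Ici.2 (Nat.cast_nonneg _)) hle
    linarith [hX s n hs n.cast_nonneg ω, hX0 s hs ω]
  have hmeas (n : ℕ) : Measurable fun ω => ((X n ω / n : ℝ) : EReal) :=
    ((hXmeas n).div_const _).coe_real_ereal
  obtain ⟨a, ha⟩ := hθ.exists_ae_eq_const (Measurable.liminf hmeas) fun s hs ω =>
    liminf_div_le_of_shift_le (shift s hs ω)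
  obtain ⟨b, hb⟩ := hθ.exists_ae_eq_const (Measurable.limsup hmeas) fun s hs ω =>
    limsup_div_le_of_shift_le (shift s hs ω)
  have hZ : IsNonposSubadditive (θ 1) fun n : ℕ => X n :=
    ⟨fun n => hX0 n n.cast_nonneg, fun m n ω => by
      simpa [hθ.iterate] using hX m n m.cast_nonneg n.cast_nonneg ω⟩
  exact hZ.ae_tendsto_div (hθ.measurePreserving 1) hXmeas hXint hC ha hb

theorem exists_ae_tendsto_div_of_nonpos (hθ : IsErgodicFlow θ μ)
    (hX : IsSubadditiveAlong θ X) (hX0 : ∀ t, 0 ≤ t → ∀ ω, X t ω ≤ 0)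
    (hXmeas : ∀ n : ℕ, Measurable (X n)) {φ : Ω → ℝ} (hφ : Integrable φ μ)
    (hφX : ∀ (n : ℕ) ω, -birkhoffSum (θ 1) φ n ω ≤ X n ω) :
    ∃ l : ℝ, ∀ᵐ ω ∂μ, Tendsto (fun t : ℝ => X t ω / t) atTop (nhds l) := by
  have hφint (n : ℕ) := integrable_birkhoffSum (hθ.measurePreserving 1) hφ n
  have hXint (n : ℕ) : Integrable (X n) μ :=
    (hφint n).mono' (hXmeas n).aestronglyMeasurable (.of_forall fun ω => by
      rw [Real.norm_of_nonpos (hX0 n n.cast_nonneg ω)]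
      exact neg_le.1 (hφX n ω))
  have hmean (n : ℕ) : n * -∫ ω, φ ω ∂μ ≤ ∫ ω, X n ω ∂μ := by
    rw [mul_neg, ← integral_birkhoffSum (hθ.measurePreserving 1) hφ, ← integral_neg]
    exact integral_mono (hφint n).neg (hXint n) (hφX n)
  obtain ⟨l, hl⟩ := hθ.exists_ae_tendsto_nat_div hX hX0 hXmeas hXint hmean
  exact ⟨l, hl.mono fun ω hω => tendsto_div_of_antitoneOn (hX.antitoneOn hX0 ω) hω⟩

end IsErgodicFlow

end Flow

section FlowIntegral

theorem stronglyMeasurable_intervalIntegral {α E : Type*} [MeasurableSpace α]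
    [NormedAddCommGroup E] [NormedSpace ℝ E] {f : ℝ → α → E}
    (hf : StronglyMeasurable (Function.uncurry f)) {a b : α → ℝ} (ha : Measurable a)
    (hb : Measurable b) : StronglyMeasurable fun x => ∫ s in a x..b x, f s x := by
  have setIntegral {a b : α → ℝ} (ha : Measurable a) (hb : Measurable b) :
      StronglyMeasurable fun x => ∫ s in Set.Ioc (a x) (b x), f s x := by
    simp only [← integral_indicator measurableSet_Ioc]
    refine ((hf.comp_measurable measurable_swap).indicator
      (s := {p | p.2 ∈ Set.Ioc (a p.1) (b p.1)}) ?_).integral_prod_right'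
    exact (measurableSet_lt (ha.comp measurable_fst) measurable_snd).inter
      (measurableSet_le measurable_snd (hb.comp measurable_fst))
  exact (setIntegral ha hb).sub (setIntegral hb ha)

/-- The additive process with density `q` over the flow `θ`, used to dominate subadditive
processes from above. -/
noncomputable def flowIntegral {Ω : Type*} (θ : ℝ → Ω → Ω) (q : Ω → ℝ) (t : ℝ) (ω : Ω) : ℝ :=
  ∫ s in (0 : ℝ)..t, q (θ s ω)

namespace IsErgodicFlow

variable {Ω : Type*} [MeasurableSpace Ω] {θ : ℝ → Ω → Ω} {μ : Measure Ω} {q : Ω → ℝ}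

theorem flowIntegral_add (hθ : IsErgodicFlow θ μ) {ω : Ω}
    (hq : ∀ a b, IntervalIntegrable (fun s => q (θ s ω)) volume a b) (s t : ℝ) :
    flowIntegral θ q (s + t) ω = flowIntegral θ q s ω + flowIntegral θ q t (θ s ω) := by
  have hshift (r : ℝ) : θ r (θ s ω) = θ (s + r) ω := by
    rw [add_comm, hθ.add, Function.comp_apply]
  simp only [flowIntegral, hshift]
  rw [intervalIntegral.integral_comp_add_left (fun r => q (θ r ω)), add_zero,
    intervalIntegral.integral_add_adjacent_intervals (hq _ _) (hq _ _)]

theorem flowIntegral_natCast (hθ : IsErgodicFlow θ μ)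
    (hq : ∀ ω a b, IntervalIntegrable (fun s => q (θ s ω)) volume a b) (n : ℕ) :
    flowIntegral θ q n = birkhoffSum (θ 1) (flowIntegral θ q 1) n := by
  induction n with
  | zero => ext ω; simp [flowIntegral]
  | succ n ih =>
    ext ω
    rw [birkhoffSum_succ, hθ.iterate, mul_one, Nat.cast_succ, hθ.flowIntegral_add (hq ω), ih]

theorem integrable_flowIntegral [IsProbabilityMeasure μ] (hθ : IsErgodicFlow θ μ)
    (hθm : Measurable fun p : ℝ × Ω => θ p.1 p.2) (hqm : Measurable q) (hq : Integrable q μ)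
    (t : ℝ) : Integrable (flowIntegral θ q t) μ := by
  have hprod : Integrable (fun p : ℝ × Ω => q (θ p.1 p.2))
      ((volume.restrict (Set.uIoc 0 t)).prod μ) := by
    have : IsFiniteMeasure (volume.restrict (Set.uIoc 0 t)) := by
      rw [Set.uIoc]; infer_instance
    refine (integrable_prod_iff (hqm.comp hθm).aestronglyMeasurable).2
      ⟨.of_forall fun s => (hθ.measurePreserving s).integrable_comp_of_integrable hq, ?_⟩
    refine (integrable_const (∫ ω, ‖q ω‖ ∂μ)).congr (.of_forall fun s => ?_)
    exact (integral_comp_of_measurePreserving (hθ.measurePreserving s) hq.norm.1).symm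
  refine (hprod.integral_prod_right.smul (if 0 ≤ t then (1 : ℝ) else -1)).congr
    (.of_forall fun ω => ?_)
  exact (intervalIntegral.intervalIntegral_eq_integral_uIoc (fun s => q (θ s ω)) 0 t volume).symm

variable [IsProbabilityMeasure μ] {X : ℝ → Ω → ℝ} {φ : Ω → ℝ}

-- `X` is the difference of the nonpositive subadditive processes `X - Q` and `-Q`, where `Q` is
-- the additive process with density `q`.
theorem exists_ae_tendsto_div (hθ : IsErgodicFlow θ μ)
    (hθm : Measurable fun p : ℝ × Ω => θ p.1 p.2) (hX : IsSubadditiveAlong θ X)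
    (hXmeas : ∀ n : ℕ, Measurable (X n)) (hqm : Measurable q) (hq : Integrable q μ)
    (hqloc : ∀ ω a b, IntervalIntegrable (fun s => q (θ s ω)) volume a b) (hq0 : ∀ ω, 0 ≤ q ω)
    (hXq : ∀ t, 0 ≤ t → ∀ ω, X t ω ≤ flowIntegral θ q t ω) (hφ : Integrable φ μ)
    (hφX : ∀ (n : ℕ) ω, -birkhoffSum (θ 1) φ n ω ≤ X n ω) :
    ∃ l : ℝ, ∀ᵐ ω ∂μ, Tendsto (fun t : ℝ => X t ω / t) atTop (nhds l) := by
  set Q := flowIntegral θ q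
  have hQint : Integrable (Q 1) μ := hθ.integrable_flowIntegral hθm hqm hq 1
  have hQmeas (t : ℝ) : Measurable (Q t) := (stronglyMeasurable_intervalIntegral
    (f := fun s ω => q (θ s ω)) (hqm.comp hθm).stronglyMeasurable measurable_const
    measurable_const).measurable
  have hQadd (s t : ℝ) (ω : Ω) : Q (s + t) ω = Q s ω + Q t (θ s ω) :=
    hθ.flowIntegral_add (hqloc ω) s t
  have hQnat (n : ℕ) : Q n = birkhoffSum (θ 1) (Q 1) n := hθ.flowIntegral_natCast hqloc n
  obtain ⟨l, hl⟩ := hθ.exists_ae_tendsto_div_of_nonpos (X := X - Q)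
    (fun s t hs ht ω => by
      simp only [Pi.sub_apply]
      linarith [hX s t hs ht ω, hQadd s t ω])
    (fun t ht ω => sub_nonpos.2 (hXq t ht ω)) (fun n => (hXmeas n).sub (hQmeas n))
    (hφ.add hQint) (fun n ω => by
      rw [birkhoffSum_add', Pi.sub_apply, Pi.sub_apply, hQnat]
      linarith [hφX n ω])
  obtain ⟨l', hl'⟩ := hθ.exists_ae_tendsto_div_of_nonpos (X := -Q)
    (fun s t _ _ ω => by
      simp only [Pi.neg_apply]
      linarith [hQadd s t ω])
    (fun t ht ω => neg_nonpos.2 (intervalIntegral.integral_nonneg ht fun s _ => hq0 _))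
    (fun n => (hQmeas n).neg) hQint (fun n ω => (congrArg (- ·) (congrFun (hQnat n) ω)).ge)
  refine ⟨l - l', ?_⟩
  filter_upwards [hl, hl'] with ω hω hω'
  refine (hω.sub hω').congr fun t => ?_
  simp only [Pi.sub_apply, Pi.neg_apply]
  ring

end IsErgodicFlow

end FlowIntegral

section IntegratingFactor

theorem absolutelyContinuousOnInterval_comp_of_lipschitzOnWith {X Y : Type*} [PseudoMetricSpace X]
    [PseudoMetricSpace Y] {f : ℝ → X} {g : X → Y} {K : NNReal} {s : Set X} {a b : ℝ}
    (hg : LipschitzOnWith K g s) (hf : AbsolutelyContinuousOnInterval f a b)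
    (hfs : Set.MapsTo f (Set.uIcc a b) s) :
    AbsolutelyContinuousOnInterval (fun x => g (f x)) a b := by
  have hbound : ∀ᶠ E in AbsolutelyContinuousOnInterval.totalLengthFilter ⊓
      𝓟 (AbsolutelyContinuousOnInterval.disjWithin a b),
      ∑ i ∈ Finset.range E.1, dist (g (f (E.2 i).1)) (g (f (E.2 i).2)) ≤
        K * ∑ i ∈ Finset.range E.1, dist (f (E.2 i).1) (f (E.2 i).2) := by
    filter_upwards [mem_inf_of_right (mem_principal_self _)] with E hE
    rw [Finset.mul_sum]
    exact Finset.sum_le_sum fun i hi =>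
      hg.dist_le_mul _ (hfs (hE.1 i hi).1) _ (hfs (hE.1 i hi).2)
  refine squeeze_zero' (.of_forall fun E => Finset.sum_nonneg fun i _ => dist_nonneg) hbound ?_
  simpa using Tendsto.const_mul (K : ℝ) hf

variable {β : ℝ → ℝ}

theorem absolutelyContinuousOnInterval_exp_integral {t : ℝ} (hβ : IntervalIntegrable β volume 0 t) :
    AbsolutelyContinuousOnInterval (fun s => Real.exp (∫ r in (0 : ℝ)..s, β r)) 0 t := by
  have hac := hβ.absolutelyContinuousOnInterval_intervalIntegral Set.left_mem_uIcc
  obtain ⟨C, hC⟩ := hac.exists_bound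
  obtain ⟨K, hK⟩ := Real.contDiff_exp.contDiffOn.exists_lipschitzOnWith (s := Set.Icc (-C) C)
    (n := 1) one_ne_zero (convex_Icc _ _) isCompact_Icc
  exact absolutelyContinuousOnInterval_comp_of_lipschitzOnWith hK hac fun s hs =>
    abs_le.1 (hC s hs)

theorem exp_integral_mul_eq {u g : ℝ → ℝ} {x t : ℝ} (hg : IntervalIntegrable g volume 0 t)
    (hβ : IntervalIntegrable β volume 0 t) (hu : ∀ t, u t = x + ∫ s in (0 : ℝ)..t, g s) :
    Real.exp (∫ s in (0 : ℝ)..t, β s) * u t =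
      x + ∫ s in (0 : ℝ)..t, Real.exp (∫ r in (0 : ℝ)..s, β r) * (g s + β s * u s) := by
  have hu' : u = fun t => x + ∫ s in (0 : ℝ)..t, g s := funext hu
  have hac : AbsolutelyContinuousOnInterval u 0 t := by
    rw [hu']
    exact ((LipschitzWith.const x).lipschitzOnWith).absolutelyContinuousOnInterval.add
      (hg.absolutelyContinuousOnInterval_intervalIntegral Set.left_mem_uIcc)
  have hftc := ((absolutelyContinuousOnInterval_exp_integral hβ).fun_mul hac).integral_deriv_eq_sub
  have hderiv : ∫ s in (0 : ℝ)..t, deriv (fun s => Real.exp (∫ r in (0 : ℝ)..s, β r) * u s) s =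
      ∫ s in (0 : ℝ)..t, Real.exp (∫ r in (0 : ℝ)..s, β r) * (g s + β s * u s) := by
    refine intervalIntegral.integral_congr_ae ?_
    filter_upwards [hg.ae_hasDerivAt_integral, hβ.ae_hasDerivAt_integral] with s hgs hβs hs
    have hs' := Set.uIoc_subset_uIcc hs
    have hdu : HasDerivAt u (g s) s := by
      rw [hu']
      exact (hgs hs' 0 Set.left_mem_uIcc).const_add x
    rw [((hβs hs' 0 Set.left_mem_uIcc).exp.fun_mul hdu).deriv]
    ring
  rw [← hderiv, hftc, hu 0]
  simp only [intervalIntegral.integral_same, Real.exp_zero, add_zero, one_mul]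
  ring

theorem integral_exp_integral_mul {t : ℝ} (hβ : IntervalIntegrable β volume 0 t) :
    ∫ s in (0 : ℝ)..t, Real.exp (∫ r in (0 : ℝ)..s, β r) * β s =
      Real.exp (∫ s in (0 : ℝ)..t, β s) - 1 := by
  have h := exp_integral_mul_eq (u := fun _ => 1) (x := 1) (g := fun _ => 0)
    intervalIntegrable_const hβ (by simp)
  simp only [zero_add, mul_one] at h
  rw [h, add_sub_cancel_left]

theorem le_exp_integral_mul {u g : ℝ → ℝ} {x t : ℝ} (hg : IntervalIntegrable g volume 0 t)
    (hβ : IntervalIntegrable β volume 0 t) (hu : ∀ t, u t = x + ∫ s in (0 : ℝ)..t, g s)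
    (ht : 0 ≤ t) (hle : ∀ s, 0 ≤ s → g s ≤ β s * u s) :
    u t ≤ Real.exp (∫ s in (0 : ℝ)..t, β s) * x := by
  have h := exp_integral_mul_eq hg hβ.neg hu
  have hnonneg : 0 ≤ ∫ s in (0 : ℝ)..t,
      -(Real.exp (∫ r in (0 : ℝ)..s, -β r) * (g s + -β s * u s)) :=
    intervalIntegral.integral_nonneg ht fun s hs => by
      have := hle s hs.1
      have := Real.exp_pos (∫ r in (0 : ℝ)..s, -β r)
      nlinarith
  simp only [intervalIntegral.integral_neg, Pi.neg_apply] at h hnonneg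
  have hx : Real.exp (-∫ s in (0 : ℝ)..t, β s) * u t ≤ x := by linarith
  rwa [Real.exp_neg, inv_mul_le_iff₀ (Real.exp_pos _)] at hx

theorem exp_integral_smul_eq {E : Type*} [NormedAddCommGroup E] [NormedSpace ℝ E] [CompleteSpace E]
    {u g : ℝ → E} {x : E} (hg : ∀ a b, IntervalIntegrable g volume a b)
    (hβ : ∀ a b, IntervalIntegrable β volume a b) (hu : ∀ t, u t = x + ∫ s in (0 : ℝ)..t, g s)
    (t : ℝ) : Real.exp (∫ s in (0 : ℝ)..t, β s) • u t =
      x + ∫ s in (0 : ℝ)..t, Real.exp (∫ r in (0 : ℝ)..s, β r) • (g s + β s • u s) := by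
  have hcont : Continuous u := by
    rw [funext hu]
    exact continuous_const.add (intervalIntegral.continuous_primitive hg 0)
  have hexp := Real.continuous_exp.comp (intervalIntegral.continuous_primitive hβ 0)
  have hint : IntervalIntegrable
      (fun s => Real.exp (∫ r in (0 : ℝ)..s, β r) • (g s + β s • u s)) volume 0 t :=
    ((hg 0 t).add ((hβ 0 t).smul_continuousOn hcont.continuousOn)).continuousOn_smul
      hexp.continuousOn
  refine (SeparatingDual.eq_iff_forall_dual_eq (R := ℝ)).2 fun f => ?_
  have hfu (t : ℝ) : f (u t) = f x + ∫ s in (0 : ℝ)..t, f (g s) := by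
    rw [f.intervalIntegral_comp_comm (hg 0 t), ← map_add, ← hu]
  have hfg : IntervalIntegrable (fun s => f (g s)) volume 0 t :=
    ⟨f.integrable_comp (hg 0 t).1, f.integrable_comp (hg 0 t).2⟩
  rw [map_add, ← f.intervalIntegral_comp_comm hint]
  simpa only [map_smul, map_add, smul_eq_mul] using exp_integral_mul_eq hfg (hβ 0 t) hfu

end IntegratingFactor

section Caratheodory

variable {E : Type*} [NormedAddCommGroup E] [NormedSpace ℝ E]

/-- `u` is a Carathéodory solution of the linear initial value problem `u' = L(t) u`, `u 0 = x`. -/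
structure IsCaratheodorySolution (L : ℝ → E →L[ℝ] E) (x : E) (u : ℝ → E) : Prop where
  continuous : Continuous u
  eq_add_integral : ∀ t, u t = x + ∫ s in (0 : ℝ)..t, L s (u s)

/-- The Picard iterates of `u' = L(t) u`, `u 0 = x`, started at the constant function `x`. -/
noncomputable def picard (L : ℝ → E →L[ℝ] E) (x : E) : ℕ → ℝ → E
  | 0 => fun _ => x
  | n + 1 => fun t => x + ∫ s in (0 : ℝ)..t, L s (picard L x n s)

variable {L : ℝ → E →L[ℝ] E} {x : E} {u : ℝ → E}

theorem intervalIntegrable_clm_apply {a b : ℝ} (hL : IntervalIntegrable L volume a b)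
    (hu : Continuous u) : IntervalIntegrable (fun s => L s (u s)) volume a b :=
  (hL.norm.mul_continuousOn hu.norm.continuousOn).mono_fun'
    ((ContinuousLinearMap.id ℝ (E →L[ℝ] E)).aestronglyMeasurable_comp₂
      hL.def'.aestronglyMeasurable hu.aestronglyMeasurable)
    (.of_forall fun s => (L s).le_opNorm _)

theorem continuous_picard (hL : ∀ a b, IntervalIntegrable L volume a b) (x : E) (n : ℕ) :
    Continuous (picard L x n) := by
  induction n with
  | zero => exact continuous_const
  | succ n ih =>
    exact continuous_const.add (intervalIntegral.continuous_primitive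
      (fun a b => intervalIntegrable_clm_apply (hL a b) ih) 0)

theorem picard_nonneg [PartialOrder E] [IsOrderedAddMonoid E] [IsOrderedModule ℝ E]
    [ClosedIciTopology E] (hL : ∀ s v, 0 ≤ v → 0 ≤ L s v) (hx : 0 ≤ x) (n : ℕ) {t : ℝ}
    (ht : 0 ≤ t) : 0 ≤ picard L x n t := by
  induction n generalizing t with
  | zero => exact hx
  | succ n ih =>
    refine add_nonneg hx ?_
    rw [intervalIntegral.integral_of_le ht]
    refine integral_nonneg_of_ae ?_
    filter_upwards [ae_restrict_mem measurableSet_Ioc] with s hs using hL s _ (ih hs.1.le)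

theorem stronglyMeasurable_picard {Ω : Type*} [MeasurableSpace Ω] {L : Ω → ℝ → E →L[ℝ] E}
    (hL : StronglyMeasurable fun p : ℝ × Ω => L p.2 p.1) (x : E) (n : ℕ) :
    StronglyMeasurable fun p : ℝ × Ω => picard (L p.2) x n p.1 := by
  induction n with
  | zero => exact stronglyMeasurable_const
  | succ n ih =>
    have hcomp : StronglyMeasurable fun p : ℝ × Ω => L p.2 p.1 (picard (L p.2) x n p.1) :=
      isBoundedBilinearMap_apply.continuous.comp_stronglyMeasurable (hL.prodMk ih)
    exact stronglyMeasurable_const.add (stronglyMeasurable_intervalIntegral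
      (f := fun s (p : ℝ × Ω) => L p.2 s (picard (L p.2) x n s))
      (hcomp.comp_measurable (measurable_fst.prodMk (measurable_snd.comp measurable_snd)))
      measurable_const measurable_fst)

namespace IsCaratheodorySolution

theorem apply_zero (hu : IsCaratheodorySolution L x u) : u 0 = x := by
  simpa using hu.eq_add_integral 0

theorem intervalIntegrable (hu : IsCaratheodorySolution L x u)
    (hL : ∀ a b, IntervalIntegrable L volume a b) (a b : ℝ) :
    IntervalIntegrable (fun s => L s (u s)) volume a b :=
  intervalIntegrable_clm_apply (hL a b) hu.continuous

-- The weight `exp (2 ∫ ‖L‖)` makes the Picard operator a contraction with constant `1 / 2`.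
theorem norm_picard_sub_le (hu : IsCaratheodorySolution L x u)
    (hL : ∀ a b, IntervalIntegrable L volume a b) {K T : ℝ}
    (hK : ∀ t ∈ Set.Icc 0 T, ‖x - u t‖ ≤ K) (n : ℕ) {t : ℝ} (ht : t ∈ Set.Icc 0 T) :
    ‖picard L x n t - u t‖ ≤ K * (1 / 2) ^ n * Real.exp (∫ s in (0 : ℝ)..t, 2 * ‖L s‖) := by
  have hβ (a b : ℝ) : IntervalIntegrable (fun s => 2 * ‖L s‖) volume a b :=
    (hL a b).norm.const_mul 2
  have hK0 : 0 ≤ K := (norm_nonneg _).trans (hK t ht)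
  induction n generalizing t with
  | zero =>
    rw [pow_zero, mul_one]
    exact (hK t ht).trans (le_mul_of_one_le_right hK0 (Real.one_le_exp
      (intervalIntegral.integral_nonneg ht.1 fun s _ => by positivity)))
  | succ n ih =>
    set C := K * (1 / 2) ^ n
    have hexp := Real.continuous_exp.comp (intervalIntegral.continuous_primitive hβ 0)
    have hsub : picard L x (n + 1) t - u t =
        ∫ s in (0 : ℝ)..t, L s (picard L x n s - u s) := by
      simp only [map_sub]
      rw [intervalIntegral.integral_sub
        (intervalIntegrable_clm_apply (hL 0 t) (continuous_picard hL x n))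
        (hu.intervalIntegrable hL 0 t), hu.eq_add_integral t]
      exact add_sub_add_left_eq_sub _ _ _
    have hpoint (s : ℝ) (hs : s ∈ Set.Ioc 0 t) : ‖L s (picard L x n s - u s)‖ ≤
        C / 2 * (Real.exp (∫ r in (0 : ℝ)..s, 2 * ‖L r‖) * (2 * ‖L s‖)) := by
      refine (L s).le_opNorm_of_le (ih ⟨hs.1.le, hs.2.trans ht.2⟩) |>.trans_eq ?_
      ring
    calc ‖picard L x (n + 1) t - u t‖
        ≤ ∫ s in (0 : ℝ)..t,
            C / 2 * (Real.exp (∫ r in (0 : ℝ)..s, 2 * ‖L r‖) * (2 * ‖L s‖)) := by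
          rw [hsub]
          exact intervalIntegral.norm_integral_le_of_norm_le ht.1 (.of_forall hpoint)
            (((hβ 0 t).continuousOn_mul hexp.continuousOn).const_mul _)
      _ = C / 2 * (Real.exp (∫ s in (0 : ℝ)..t, 2 * ‖L s‖) - 1) := by
          rw [intervalIntegral.integral_const_mul, integral_exp_integral_mul (hβ 0 t)]
      _ ≤ C / 2 * Real.exp (∫ s in (0 : ℝ)..t, 2 * ‖L s‖) := by gcongr; linarith
      _ = K * (1 / 2) ^ (n + 1) * Real.exp (∫ s in (0 : ℝ)..t, 2 * ‖L s‖) := by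
          rw [pow_succ]; ring

theorem tendsto_picard (hu : IsCaratheodorySolution L x u)
    (hL : ∀ a b, IntervalIntegrable L volume a b) {t : ℝ} (ht : 0 ≤ t) :
    Tendsto (fun n => picard L x n t) atTop (nhds (u t)) := by
  obtain ⟨K, hK⟩ := isCompact_Icc.exists_bound_of_continuousOn
    (continuous_const (y := x) |>.sub hu.continuous).continuousOn (s := Set.Icc 0 t)
  refine tendsto_iff_norm_sub_tendsto_zero.2 (squeeze_zero (fun _ => norm_nonneg _)
    (fun n => hu.norm_picard_sub_le hL hK n (Set.right_mem_Icc.2 ht)) ?_)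
  simpa using ((tendsto_pow_atTop_nhds_zero_of_lt_one (r := (1 / 2 : ℝ)) (by norm_num)
    (by norm_num)).const_mul K).mul_const (Real.exp (∫ s in (0 : ℝ)..t, 2 * ‖L s‖))

theorem eq_of_nonneg {v : ℝ → E} (hu : IsCaratheodorySolution L x u)
    (hv : IsCaratheodorySolution L x v) (hL : ∀ a b, IntervalIntegrable L volume a b) {t : ℝ}
    (ht : 0 ≤ t) : u t = v t :=
  tendsto_nhds_unique (hu.tendsto_picard hL ht) (hv.tendsto_picard hL ht)

theorem comp_const_add (hu : IsCaratheodorySolution L x u)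
    (hL : ∀ a b, IntervalIntegrable L volume a b) (s : ℝ) :
    IsCaratheodorySolution (fun r => L (s + r)) (u s) (fun r => u (s + r)) where
  continuous := hu.continuous.comp (continuous_const.add continuous_id)
  eq_add_integral t := by
    rw [intervalIntegral.integral_comp_add_left (fun r => L r (u r)), add_zero,
      hu.eq_add_integral (s + t), hu.eq_add_integral s, add_assoc,
      intervalIntegral.integral_add_adjacent_intervals (hu.intervalIntegrable hL _ _)
        (hu.intervalIntegrable hL _ _)]

theorem exp_smul [CompleteSpace E] (hu : IsCaratheodorySolution L x u)
    (hL : ∀ a b, IntervalIntegrable L volume a b) {β : ℝ → ℝ}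
    (hβ : ∀ a b, IntervalIntegrable β volume a b) :
    IsCaratheodorySolution (fun s => L s + β s • ContinuousLinearMap.id ℝ E) x
      (fun t => Real.exp (∫ s in (0 : ℝ)..t, β s) • u t) where
  continuous := (Real.continuous_exp.comp
    (intervalIntegral.continuous_primitive hβ 0)).smul hu.continuous
  eq_add_integral t := by
    simpa using exp_integral_smul_eq (hu.intervalIntegrable hL) hβ hu.eq_add_integral t

-- Adding `β` to the generator multiplies solutions by a positive factor and makes it positive, and
-- then all Picard iterates are nonnegative.
theorem nonneg [CompleteSpace E] [PartialOrder E] [IsOrderedAddMonoid E] [IsOrderedModule ℝ E]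
    [ClosedIciTopology E] (hu : IsCaratheodorySolution L x u)
    (hL : ∀ a b, IntervalIntegrable L volume a b) {β : ℝ → ℝ}
    (hβ : ∀ a b, IntervalIntegrable β volume a b) (hLβ : ∀ s v, 0 ≤ v → 0 ≤ L s v + β s • v)
    (hx : 0 ≤ x) {t : ℝ} (ht : 0 ≤ t) : 0 ≤ u t := by
  have hLβint (a b : ℝ) : IntervalIntegrable
      (fun s => L s + β s • ContinuousLinearMap.id ℝ E) volume a b :=
    (hL a b).add ((hβ a b).smul_continuousOn continuousOn_const)
  have hexp : 0 ≤ Real.exp (∫ s in (0 : ℝ)..t, β s) • u t :=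
    ge_of_tendsto' ((hu.exp_smul hL hβ).tendsto_picard hLβint ht)
      fun n => picard_nonneg hLβ hx n ht
  simpa [smul_smul, ← Real.exp_add] using
    smul_nonneg (Real.exp_nonneg (-∫ s in (0 : ℝ)..t, β s)) hexp

theorem clm_apply_le [CompleteSpace E] (hu : IsCaratheodorySolution L x u)
    (hL : ∀ a b, IntervalIntegrable L volume a b) {t : ℝ} (ht : 0 ≤ t) {b : ℝ → ℝ}
    (hb : IntervalIntegrable b volume 0 t) (f : E →L[ℝ] ℝ)
    (hf : ∀ s, 0 ≤ s → f (L s (u s)) ≤ b s * f (u s)) :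
    f (u t) ≤ Real.exp (∫ s in (0 : ℝ)..t, b s) * f x := by
  have hint := hu.intervalIntegrable hL
  refine le_exp_integral_mul (u := fun s => f (u s)) (g := fun s => f (L s (u s)))
    ⟨f.integrable_comp (hint 0 t).1, f.integrable_comp (hint 0 t).2⟩ hb (fun s => ?_) ht hf
  rw [f.intervalIntegral_comp_comm (hint 0 s), ← map_add, ← hu.eq_add_integral]

end IsCaratheodorySolution

end Caratheodory

section FundamentalMatrix

theorem intervalIntegrable_sum_smul_const {κ E : Type*} [Fintype κ] [NormedAddCommGroup E]
    [NormedSpace ℝ E] {c : ℝ → κ → ℝ} {a b : ℝ}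
    (hc : ∀ k, IntervalIntegrable (fun s => c s k) volume a b) (v : κ → E) :
    IntervalIntegrable (fun s => ∑ k, c s k • v k) volume a b := by
  simp only [intervalIntegrable_iff, IntegrableOn] at hc ⊢
  exact integrable_finsetSum _ fun k _ => (hc k).smul_const _

variable {ι : Type*} [Fintype ι]

/-- The continuous linear operator `v ↦ M *ᵥ v`, depending linearly on the matrix `M`. -/
noncomputable def mulVecCLM : Matrix ι ι ℝ →ₗ[ℝ] (ι → ℝ) →L[ℝ] (ι → ℝ) :=
  LinearMap.toContinuousLinearMap.toLinearMap ∘ₗ Matrix.mulVecBilin ℝ ℝ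

theorem mulVecCLM_apply (M : Matrix ι ι ℝ) (v : ι → ℝ) : mulVecCLM M v = M *ᵥ v := rfl

/-- `U` is the principal fundamental matrix at time `0` of the linear system `u' = M(t) u`. -/
def IsFundamentalMatrix (M U : ℝ → Matrix ι ι ℝ) : Prop :=
  ∀ x, IsCaratheodorySolution (fun s => mulVecCLM (M s)) x (fun t => U t *ᵥ x)

theorem mulVecCLM_eq_sum [DecidableEq ι] (M : Matrix ι ι ℝ) :
    mulVecCLM M = ∑ p : ι × ι, M p.1 p.2 • mulVecCLM (Matrix.single p.1 p.2 (1 : ℝ)) := by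
  conv_lhs => rw [matrix_eq_sum_single M]
  simp only [map_sum, ← map_smul, Matrix.smul_single, smul_eq_mul, mul_one,
    Fintype.sum_prod_type]

theorem intervalIntegrable_mulVecCLM {M : ℝ → Matrix ι ι ℝ} {a b : ℝ}
    (hM : ∀ i j, IntervalIntegrable (fun s => M s i j) volume a b) :
    IntervalIntegrable (fun s => mulVecCLM (M s)) volume a b := by
  classical
  rw [funext fun s => mulVecCLM_eq_sum (M s)]
  exact intervalIntegrable_sum_smul_const (c := fun s (p : ι × ι) => M s p.1 p.2)
    (fun p => hM p.1 p.2) _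

theorem stronglyMeasurable_mulVecCLM {α : Type*} [MeasurableSpace α] {M : α → Matrix ι ι ℝ}
    (hM : ∀ i j, Measurable fun x => M x i j) :
    StronglyMeasurable fun x => mulVecCLM (M x) := by
  classical
  rw [funext fun x => mulVecCLM_eq_sum (M x)]
  exact Finset.stronglyMeasurable_fun_sum _ fun p _ =>
    (hM p.1 p.2).stronglyMeasurable.smul_const _

theorem mulVec_add_smul_nonneg {M : Matrix ι ι ℝ} (hM : ∀ i j, i ≠ j → 0 ≤ M i j) {v : ι → ℝ}
    (hv : 0 ≤ v) : 0 ≤ M *ᵥ v + (∑ i, |M i i|) • v := by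
  classical
  have hentry (i j : ι) : 0 ≤ (M + (∑ i, |M i i|) • (1 : Matrix ι ι ℝ)) i j := by
    rcases eq_or_ne i j with rfl | hij
    · have hle : |M i i| ≤ ∑ k, |M k k| :=
        Finset.single_le_sum (f := fun k => |M k k|) (fun _ _ => abs_nonneg _) (Finset.mem_univ i)
      simpa using by linarith [neg_abs_le (M i i)]
    · simpa [hij] using hM i j hij
  have hmul : (M + (∑ i, |M i i|) • (1 : Matrix ι ι ℝ)) *ᵥ v = M *ᵥ v + (∑ i, |M i i|) • v := by
    rw [add_mulVec, smul_mulVec, one_mulVec]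
  rw [← hmul]
  exact fun i => Finset.sum_nonneg fun j _ => mul_nonneg (hentry i j) (hv j)

namespace IsFundamentalMatrix

variable {M U : ℝ → Matrix ι ι ℝ}

theorem apply_zero [DecidableEq ι] (hU : IsFundamentalMatrix M U) : U 0 = 1 :=
  Matrix.ext_of_mulVec_single fun j => by rw [(hU _).apply_zero, one_mulVec]

theorem apply_add (hU : IsFundamentalMatrix M U)
    (hM : ∀ i j a b, IntervalIntegrable (fun s => M s i j) volume a b) {V : ℝ → Matrix ι ι ℝ}
    {s t : ℝ} (hV : IsFundamentalMatrix (fun r => M (s + r)) V) (ht : 0 ≤ t) :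
    U (s + t) = V t * U s := by
  classical
  have hL (a b : ℝ) := intervalIntegrable_mulVecCLM fun i j => hM i j a b
  have hLs (a b : ℝ) := intervalIntegrable_mulVecCLM fun i j =>
    (hM i j (s + a) (s + b)).comp_add_left s
  refine Matrix.ext_of_mulVec_single fun j => ?_
  rw [← mulVec_mulVec]
  exact ((hU _).comp_const_add hL s).eq_of_nonneg (hV _) (by simpa using hLs) ht

theorem nonneg (hU : IsFundamentalMatrix M U)
    (hM : ∀ i j a b, IntervalIntegrable (fun s => M s i j) volume a b)
    (hcoop : ∀ s i j, i ≠ j → 0 ≤ M s i j) {t : ℝ} (ht : 0 ≤ t) (i j : ι) : 0 ≤ U t i j := by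
  classical
  have hdiag (a b : ℝ) : IntervalIntegrable (fun s => ∑ i, |M s i i|) volume a b :=
    ⟨integrable_finsetSum _ fun i _ => (hM i i a b).1.abs,
      integrable_finsetSum _ fun i _ => (hM i i a b).2.abs⟩
  have h := (hU (Pi.single j 1)).nonneg (fun a b => intervalIntegrable_mulVecCLM (hM · · a b)) hdiag
    (fun s v hv => mulVec_add_smul_nonneg (hcoop s) hv) (Pi.single_nonneg.2 zero_le_one) ht i
  rwa [mulVec_single_one] at h

theorem sum_col_le (hU : IsFundamentalMatrix M U)
    (hM : ∀ i j a b, IntervalIntegrable (fun s => M s i j) volume a b) {t : ℝ} (ht : 0 ≤ t)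
    (hU0 : ∀ s, 0 ≤ s → ∀ i j, 0 ≤ U s i j) {b : ℝ → ℝ} (hb : IntervalIntegrable b volume 0 t)
    (hMb : ∀ s i j, M s i j ≤ b s) (j : ι) :
    ∑ i, U t i j ≤ Real.exp (∫ s in (0 : ℝ)..t, Fintype.card ι * b s) := by
  classical
  let coordSum : (ι → ℝ) →L[ℝ] ℝ := ∑ i, ContinuousLinearMap.proj i
  have hsum (v : ι → ℝ) : coordSum v = ∑ i, v i := by simp [coordSum]
  have h := (hU (Pi.single j 1)).clm_apply_le
    (fun a b => intervalIntegrable_mulVecCLM (hM · · a b)) ht (hb.const_mul (Fintype.card ι))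
    coordSum fun s hs => ?_
  · simpa [hsum, mulVec_single_one] using h
  · simp only [hsum, mulVecCLM_apply, mulVec_single_one]
    calc ∑ i, (M s *ᵥ (U s).col j) i
        ≤ ∑ _i : ι, ∑ k, b s * U s k j := Finset.sum_le_sum fun i _ => Finset.sum_le_sum fun k _ =>
          mul_le_mul_of_nonneg_right (hMb s i k) (hU0 s hs k j)
      _ = Fintype.card ι * b s * ∑ k, U s k j := by
          rw [Finset.sum_const, Finset.card_univ, nsmul_eq_mul, ← Finset.mul_sum, mul_assoc]

theorem measurable_apply {Ω : Type*} [MeasurableSpace Ω] {M U : Ω → ℝ → Matrix ι ι ℝ}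
    (hU : ∀ ω, IsFundamentalMatrix (M ω) (U ω))
    (hM : ∀ ω i j a b, IntervalIntegrable (fun s => M ω s i j) volume a b)
    (hMm : ∀ i j, Measurable fun p : ℝ × Ω => M p.2 p.1 i j) {t : ℝ} (ht : 0 ≤ t) (i j : ι) :
    Measurable fun ω => U ω t i j := by
  classical
  have hcol : StronglyMeasurable fun ω => U ω t *ᵥ Pi.single j 1 :=
    stronglyMeasurable_of_tendsto atTop
      (fun n => (stronglyMeasurable_picard (L := fun ω s => mulVecCLM (M ω s))
        (stronglyMeasurable_mulVecCLM hMm) (Pi.single j 1) n).comp_measurable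
        (measurable_prodMk_left (x := t)))
      (tendsto_pi_nhds.2 fun ω => (hU ω _).tendsto_picard
        (fun a b => intervalIntegrable_mulVecCLM (hM ω · · a b)) ht)
  simp only [mulVec_single_one] at hcol
  exact (measurable_pi_apply i).comp hcol.measurable

end IsFundamentalMatrix

end FundamentalMatrix

section MaxColSum

variable {ι : Type*} [Fintype ι]

/-- The largest column sum of a matrix. On matrices with nonnegative entries it is the operator
norm induced by the `ℓ¹` norm. -/
noncomputable def maxColSum (M : Matrix ι ι ℝ) : ℝ := ⨆ j, ∑ i, M i j

theorem sum_col_le_maxColSum (M : Matrix ι ι ℝ) (j : ι) : ∑ i, M i j ≤ maxColSum M :=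
  Finite.le_ciSup (fun j => ∑ i, M i j) j

theorem maxColSum_nonneg {M : Matrix ι ι ℝ} (hM : ∀ i j, 0 ≤ M i j) : 0 ≤ maxColSum M :=
  Real.iSup_nonneg fun j => Finset.sum_nonneg fun i _ => hM i j

theorem measurable_maxColSum {α : Type*} [MeasurableSpace α] {M : α → Matrix ι ι ℝ}
    (hM : ∀ i j, Measurable fun x => M x i j) : Measurable fun x => maxColSum (M x) :=
  .iSup fun j => Finset.measurable_fun_sum _ fun i _ => hM i j

theorem sum_mulVec_le_maxColSum_mul (M : Matrix ι ι ℝ) {v : ι → ℝ} (hv : 0 ≤ v) :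
    ∑ i, (M *ᵥ v) i ≤ maxColSum M * ∑ j, v j := by
  calc ∑ i, (M *ᵥ v) i = ∑ j, (∑ i, M i j) * v j := by
        simp only [mulVec, dotProduct, Finset.sum_mul]
        exact Finset.sum_comm
    _ ≤ ∑ j, maxColSum M * v j := Finset.sum_le_sum fun j _ =>
        mul_le_mul_of_nonneg_right (sum_col_le_maxColSum M j) (hv j)
    _ = maxColSum M * ∑ j, v j := (Finset.mul_sum _ _ _).symm

theorem maxColSum_mul_le {P Q : Matrix ι ι ℝ} (hP : ∀ i j, 0 ≤ P i j) (hQ : ∀ i j, 0 ≤ Q i j) :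
    maxColSum (P * Q) ≤ maxColSum P * maxColSum Q :=
  Real.iSup_le (fun j => (sum_mulVec_le_maxColSum_mul P (v := fun k => Q k j) (hQ · j)).trans
    (mul_le_mul_of_nonneg_left (sum_col_le_maxColSum Q j) (maxColSum_nonneg hP)))
    (mul_nonneg (maxColSum_nonneg hP) (maxColSum_nonneg hQ))

theorem le_maxColSum_of_smul_le_mulVec {M : Matrix ι ι ℝ} {e : ι → ℝ} (he : 0 < e) {c : ℝ}
    (h : c • e ≤ M *ᵥ e) : c ≤ maxColSum M := by
  have hsum : 0 < ∑ i, e i := Fintype.sum_pos he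
  refine le_of_mul_le_mul_right ?_ hsum
  calc c * ∑ i, e i = ∑ i, (c • e) i := Finset.mul_sum _ _ _
    _ ≤ ∑ i, (M *ᵥ e) i := Finset.sum_le_sum fun i _ => h i
    _ ≤ maxColSum M * ∑ i, e i := sum_mulVec_le_maxColSum_mul M he.le

end MaxColSum

section MaxEntry

variable {ι : Type*}

/-- The positive part of the largest entry of a matrix. -/
noncomputable def maxEntryPos (M : Matrix ι ι ℝ) : ℝ := max (⨆ i, ⨆ j, M i j) 0

theorem apply_le_maxEntryPos [Finite ι] (M : Matrix ι ι ℝ) (i j : ι) : M i j ≤ maxEntryPos M :=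
  ((Finite.le_ciSup (M i) j).trans (Finite.le_ciSup (fun i => ⨆ j, M i j) i)).trans
    (le_max_left _ _)

theorem maxEntryPos_nonneg (M : Matrix ι ι ℝ) : 0 ≤ maxEntryPos M := le_max_right _ _

theorem maxEntryPos_le {M : Matrix ι ι ℝ} {c : ℝ} (hc : 0 ≤ c) (hM : ∀ i j, M i j ≤ c) :
    maxEntryPos M ≤ c :=
  max_le (Real.iSup_le (fun i => Real.iSup_le (hM i) hc) hc) hc

theorem measurable_maxEntryPos [Finite ι] {α : Type*} [MeasurableSpace α]
    {M : α → Matrix ι ι ℝ} (hM : ∀ i j, Measurable fun x => M x i j) :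
    Measurable fun x => maxEntryPos (M x) :=
  (Measurable.iSup fun i => Measurable.iSup fun j => hM i j).max measurable_const

theorem intervalIntegrable_maxEntryPos [Finite ι] {M : ℝ → Matrix ι ι ℝ}
    (hMm : ∀ i j, Measurable (M · i j)) {a b : ℝ}
    (hM : ∀ i j, IntervalIntegrable (M · i j) volume a b) :
    IntervalIntegrable (fun s => maxEntryPos (M s)) volume a b := by
  have := Fintype.ofFinite ι
  have hsum : IntervalIntegrable (fun s => ∑ i, ∑ j, |M s i j|) volume a b := by
    simp only [intervalIntegrable_iff, IntegrableOn] at hM ⊢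
    exact integrable_finsetSum _ fun i _ => integrable_finsetSum _ fun j _ => (hM i j).abs
  refine hsum.mono_fun' (measurable_maxEntryPos hMm).aestronglyMeasurable (.of_forall fun s => ?_)
  refine (Real.norm_of_nonneg (maxEntryPos_nonneg (M s))).trans_le
    (maxEntryPos_le (by positivity) fun i j => (le_abs_self _).trans ?_)
  calc |M s i j| ≤ ∑ j, |M s i j| :=
        Finset.single_le_sum (f := fun j => |M s i j|) (fun _ _ => abs_nonneg _)
          (Finset.mem_univ j)
    _ ≤ ∑ i, ∑ j, |M s i j| :=
        Finset.single_le_sum (f := fun i => ∑ j, |M s i j|)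
          (fun _ _ => Finset.sum_nonneg fun _ _ => abs_nonneg _) (Finset.mem_univ i)

end MaxEntry

section EuclideanNorm

variable {N : ℕ}

theorem abs_apply_le_enorm' (u : Fin N → ℝ) (i : Fin N) : |u i| ≤ enorm' u :=
  Real.abs_le_sqrt (Finset.single_le_sum (f := fun i => u i ^ 2) (fun j _ => sq_nonneg (u j))
    (Finset.mem_univ i))

theorem enorm'_le_sum_abs (u : Fin N → ℝ) : enorm' u ≤ ∑ i, |u i| := by
  refine Real.sqrt_le_iff.2 ⟨Finset.sum_nonneg fun i _ => abs_nonneg _, ?_⟩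
  simpa using Finset.sum_sq_le_sq_sum_of_nonneg (s := Finset.univ) (f := fun i => |u i|)
    fun _ _ => abs_nonneg _

theorem enorm'_zero : enorm' (0 : Fin N → ℝ) = 0 := by simp [enorm']

theorem enorm'_single (j : Fin N) : enorm' (Pi.single j (1 : ℝ)) = 1 := by
  simp [enorm', Pi.single_apply, ite_pow]

theorem enorm'_mulVec_le_sum_abs (M : Matrix (Fin N) (Fin N) ℝ) {u : Fin N → ℝ}
    (hu : enorm' u ≤ 1) : enorm' (M *ᵥ u) ≤ ∑ i, ∑ j, |M i j| := by
  refine (enorm'_le_sum_abs _).trans (Finset.sum_le_sum fun i _ => ?_)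
  calc |∑ j, M i j * u j| ≤ ∑ j, |M i j * u j| := Finset.abs_sum_le_sum_abs _ _
    _ ≤ ∑ j, |M i j| := Finset.sum_le_sum fun j _ => by
      rw [abs_mul]
      exact mul_le_of_le_one_right (abs_nonneg _) ((abs_apply_le_enorm' u j).trans hu)

theorem abs_apply_le_eopNorm (M : Matrix (Fin N) (Fin N) ℝ) (i j : Fin N) :
    |M i j| ≤ eopNorm M := by
  have hcol : |M i j| ≤ enorm' (M *ᵥ Pi.single j 1) := by
    simpa only [mulVec_single_one, col_apply] using abs_apply_le_enorm' (M *ᵥ Pi.single j 1) i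
  refine hcol.trans (le_csSup ⟨∑ i, ∑ j, |M i j|, ?_⟩ ⟨_, (enorm'_single j).le, rfl⟩)
  rintro c ⟨u, hu, rfl⟩
  exact enorm'_mulVec_le_sum_abs M hu

theorem eopNorm_nonneg (M : Matrix (Fin N) (Fin N) ℝ) : 0 ≤ eopNorm M :=
  Real.sSup_nonneg fun _ ⟨_, _, hc⟩ => hc ▸ Real.sqrt_nonneg _

theorem maxColSum_le_mul_eopNorm (M : Matrix (Fin N) (Fin N) ℝ) :
    maxColSum M ≤ N * eopNorm M := by
  refine Real.iSup_le (fun j => ?_) (mul_nonneg N.cast_nonneg (eopNorm_nonneg M))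
  simpa using Finset.sum_le_card_nsmul Finset.univ (fun i => M i j) (eopNorm M)
    fun i _ => (le_abs_self _).trans (abs_apply_le_eopNorm M i j)

theorem eopNorm_le_mul_maxColSum {M : Matrix (Fin N) (Fin N) ℝ} (hM : ∀ i j, 0 ≤ M i j) :
    eopNorm M ≤ N * maxColSum M := by
  refine csSup_le ⟨_, 0, enorm'_zero.trans_le zero_le_one, rfl⟩ ?_
  rintro c ⟨u, hu, rfl⟩
  refine (enorm'_mulVec_le_sum_abs M hu).trans ?_
  simp only [abs_of_nonneg (hM _ _)]
  rw [Finset.sum_comm (f := fun i j => M i j)]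
  simpa using Finset.sum_le_card_nsmul Finset.univ (fun j => ∑ i, M i j) (maxColSum M)
    fun j _ => sum_col_le_maxColSum M j

theorem abs_log_sub_log_le {a b c : ℝ} (ha : 0 < a) (hb : 0 < b) (hab : a ≤ c * b)
    (hba : b ≤ c * a) : |Real.log a - Real.log b| ≤ Real.log c := by
  have hc : 0 < c := pos_of_mul_pos_left (ha.trans_le hab) hb.le
  have h₁ := Real.log_le_log ha hab
  have h₂ := Real.log_le_log hb hba
  rw [Real.log_mul hc.ne' hb.ne'] at h₁
  rw [Real.log_mul hc.ne' ha.ne'] at h₂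
  exact abs_sub_le_iff.2 ⟨by linarith, by linarith⟩

theorem abs_log_eopNorm_sub_log_maxColSum_le {M : Matrix (Fin N) (Fin N) ℝ}
    (hM : ∀ i j, 0 ≤ M i j) (hpos : 0 < maxColSum M) :
    |Real.log (eopNorm M) - Real.log (maxColSum M)| ≤ Real.log N :=
  have hle := maxColSum_le_mul_eopNorm M
  abs_log_sub_log_le (pos_of_mul_pos_right (hpos.trans_le hle) N.cast_nonneg) hpos
    (eopNorm_le_mul_maxColSum hM) hle

end EuclideanNorm

theorem tendsto_div_of_abs_sub_le {f g : ℝ → ℝ} {C l : ℝ} (hfg : ∀ t, 0 ≤ t → |g t - f t| ≤ C)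
    (hf : Tendsto (fun t => f t / t) atTop (nhds l)) :
    Tendsto (fun t => g t / t) atTop (nhds l) := by
  have hbound := (eventually_ge_atTop (0 : ℝ)).mono hfg
  have hdiff : Tendsto (fun t => (g t - f t) / t) atTop (nhds 0) :=
    tendsto_bdd_div_atTop_nhds_zero (hbound.mono fun t h => (abs_le.1 h).1)
      (hbound.mono fun t h => (abs_le.1 h).2) tendsto_id
  simpa only [← add_div, sub_add_cancel, zero_add] using hdiff.add hf

section Cocycle

variable {Ω ι : Type*} [Fintype ι] {θ : ℝ → Ω → Ω}

theorem mulVec_mono {P : Matrix ι ι ℝ} (hP : ∀ i j, 0 ≤ P i j) : Monotone (P *ᵥ ·) :=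
  fun _ _ hvw i => Finset.sum_le_sum fun j _ => mul_le_mul_of_nonneg_left (hvw j) (hP i j)

variable [DecidableEq ι]

/-- Linear cocycles over the flow `θ` whose matrices have nonnegative entries, with all conditions
imposed at nonnegative times only. -/
structure IsNonnegCocycle (θ : ℝ → Ω → Ω) (U : Ω → ℝ → Matrix ι ι ℝ) : Prop where
  apply_zero (ω : Ω) : U ω 0 = 1
  apply_add (ω : Ω) {s t : ℝ} (hs : 0 ≤ s) (ht : 0 ≤ t) : U ω (s + t) = U (θ s ω) t * U ω s
  nonneg (ω : Ω) {t : ℝ} (ht : 0 ≤ t) (i j : ι) : 0 ≤ U ω t i j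

namespace IsNonnegCocycle

variable {U : Ω → ℝ → Matrix ι ι ℝ} {e : ι → ℝ} {φ : Ω → ℝ}

theorem exp_neg_birkhoffSum_smul_le (hU : IsNonnegCocycle θ U)
    (hφ : ∀ ω, Real.exp (-φ ω) • e ≤ U ω 1 *ᵥ e) (n : ℕ) (ω : Ω) :
    Real.exp (-birkhoffSum (θ 1) φ n ω) • e ≤ U ω n *ᵥ e := by
  induction n generalizing ω with
  | zero => simp [hU.apply_zero]
  | succ n ih =>
    rw [birkhoffSum_succ', neg_add, Real.exp_add, mul_smul, Nat.cast_succ, add_comm (n : ℝ),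
      hU.apply_add ω zero_le_one n.cast_nonneg, ← mulVec_mulVec]
    calc Real.exp (-φ ω) • Real.exp (-birkhoffSum (θ 1) φ n (θ 1 ω)) • e
        ≤ Real.exp (-φ ω) • (U (θ 1 ω) n *ᵥ e) :=
          smul_le_smul_of_nonneg_left (ih _) (Real.exp_pos _).le
      _ = U (θ 1 ω) n *ᵥ (Real.exp (-φ ω) • e) := (mulVec_smul _ _ _).symm
      _ ≤ U (θ 1 ω) n *ᵥ (U ω 1 *ᵥ e) := mulVec_mono (hU.nonneg _ n.cast_nonneg) (hφ ω)

theorem exp_neg_birkhoffSum_le_maxColSum (hU : IsNonnegCocycle θ U) (he : 0 < e)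
    (hφ : ∀ ω, Real.exp (-φ ω) • e ≤ U ω 1 *ᵥ e) (n : ℕ) (ω : Ω) :
    Real.exp (-birkhoffSum (θ 1) φ n ω) ≤ maxColSum (U ω n) :=
  le_maxColSum_of_smul_le_mulVec he (hU.exp_neg_birkhoffSum_smul_le hφ n ω)

theorem maxColSum_add_le (hU : IsNonnegCocycle θ U) (ω : Ω) {s t : ℝ} (hs : 0 ≤ s)
    (ht : 0 ≤ t) : maxColSum (U ω (s + t)) ≤ maxColSum (U (θ s ω) t) * maxColSum (U ω s) := by
  rw [hU.apply_add ω hs ht]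
  exact maxColSum_mul_le (hU.nonneg _ ht) (hU.nonneg _ hs)

theorem maxColSum_pos (hU : IsNonnegCocycle θ U) (he : 0 < e)
    (hφ : ∀ ω, Real.exp (-φ ω) • e ≤ U ω 1 *ᵥ e) (ω : Ω) {t : ℝ} (ht : 0 ≤ t) :
    0 < maxColSum (U ω t) := by
  obtain ⟨n, hn⟩ := exists_nat_ge t
  have hmul : 0 < maxColSum (U (θ t ω) (n - t)) * maxColSum (U ω t) := by
    refine (Real.exp_pos (-birkhoffSum (θ 1) φ n ω)).trans_le
      ((hU.exp_neg_birkhoffSum_le_maxColSum he hφ n ω).trans ?_)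
    simpa using hU.maxColSum_add_le ω ht (sub_nonneg.2 hn)
  exact pos_of_mul_pos_right hmul (maxColSum_nonneg (hU.nonneg _ (sub_nonneg.2 hn)))

theorem isSubadditiveAlong_log_maxColSum (hU : IsNonnegCocycle θ U)
    (hpos : ∀ ω {t : ℝ}, 0 ≤ t → 0 < maxColSum (U ω t)) :
    IsSubadditiveAlong θ fun t ω => Real.log (maxColSum (U ω t)) := fun s t hs ht ω => by
  refine (Real.log_le_log (hpos _ (add_nonneg hs ht)) (hU.maxColSum_add_le ω hs ht)).trans_eq ?_
  rw [Real.log_mul (hpos _ ht).ne' (hpos _ hs).ne', add_comm]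

end IsNonnegCocycle

end Cocycle

section CooperativeSystem

variable {Ω ι : Type*} [Fintype ι] [DecidableEq ι] {θ : ℝ → Ω → Ω} {A : Ω → Matrix ι ι ℝ}
  {U : Ω → ℝ → Matrix ι ι ℝ}

theorem isNonnegCocycle_of_isFundamentalMatrix (hadd : ∀ s t, θ (s + t) = θ s ∘ θ t)
    (hA : ∀ ω i j a b, IntervalIntegrable (fun s => A (θ s ω) i j) volume a b)
    (hcoop : ∀ ω i j, i ≠ j → 0 ≤ A ω i j)
    (hU : ∀ ω, IsFundamentalMatrix (fun s => A (θ s ω)) (U ω)) : IsNonnegCocycle θ U where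
  apply_zero ω := (hU ω).apply_zero
  apply_add ω s t _ ht := (hU ω).apply_add (hA ω)
    (by simpa only [add_comm s, hadd, Function.comp_apply] using hU (θ s ω)) ht
  nonneg ω _ ht := (hU ω).nonneg (hA ω) (fun s => hcoop (θ s ω)) ht

theorem maxColSum_le_exp_flowIntegral
    (hA : ∀ ω i j a b, IntervalIntegrable (fun s => A (θ s ω) i j) volume a b)
    (hb : ∀ ω a b, IntervalIntegrable (fun s => maxEntryPos (A (θ s ω))) volume a b)
    (hU : ∀ ω, IsFundamentalMatrix (fun s => A (θ s ω)) (U ω)) (hUc : IsNonnegCocycle θ U)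
    {t : ℝ} (ht : 0 ≤ t) (ω : Ω) : maxColSum (U ω t) ≤
      Real.exp (flowIntegral θ (fun ω => Fintype.card ι * maxEntryPos (A ω)) t ω) :=
  Real.iSup_le (fun j => (hU ω).sum_col_le (hA ω) ht (fun _ hs => hUc.nonneg ω hs) (hb ω 0 t)
    (fun s => apply_le_maxEntryPos (A (θ s ω))) j) (Real.exp_pos _).le

theorem exists_ae_tendsto_log_maxColSum_div [MeasurableSpace Ω] {μ : Measure Ω}
    [IsProbabilityMeasure μ] (hθ : IsErgodicFlow θ μ)
    (hθm : Measurable fun p : ℝ × Ω => θ p.1 p.2) (hAm : ∀ i j, Measurable fun ω => A ω i j)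
    (hA : ∀ ω i j a b, IntervalIntegrable (fun s => A (θ s ω) i j) volume a b)
    (hAint : Integrable (fun ω => maxEntryPos (A ω)) μ)
    (hU : ∀ ω, IsFundamentalMatrix (fun s => A (θ s ω)) (U ω)) (hUc : IsNonnegCocycle θ U)
    {e : ι → ℝ} (he : 0 < e) {φ : Ω → ℝ} (hφ : Integrable φ μ)
    (hφe : ∀ ω, Real.exp (-φ ω) • e ≤ U ω 1 *ᵥ e) : ∃ l : ℝ, ∀ᵐ ω ∂μ,
      Tendsto (fun t : ℝ => Real.log (maxColSum (U ω t)) / t) atTop (nhds l) := by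
  have hpos (ω : Ω) {t : ℝ} (ht : 0 ≤ t) : 0 < maxColSum (U ω t) := hUc.maxColSum_pos he hφe ω ht
  have hmax (ω : Ω) (a b : ℝ) : IntervalIntegrable (fun s => maxEntryPos (A (θ s ω))) volume a b :=
    intervalIntegrable_maxEntryPos
      (fun i j => (hAm i j).comp (hθm.comp measurable_prodMk_right)) (hA ω · · a b)
  have hmeas (n : ℕ) : Measurable fun ω => Real.log (maxColSum (U ω n)) :=
    (measurable_maxColSum (IsFundamentalMatrix.measurable_apply hU hA
      (fun i j => (hAm i j).comp hθm) n.cast_nonneg)).log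
  exact hθ.exists_ae_tendsto_div hθm (hUc.isSubadditiveAlong_log_maxColSum hpos) hmeas
    ((measurable_maxEntryPos hAm).const_mul _) (hAint.const_mul _)
    (fun ω a b => (hmax ω a b).const_mul _)
    (fun ω => mul_nonneg (Nat.cast_nonneg _) (maxEntryPos_nonneg _))
    (fun t ht ω => (Real.log_le_iff_le_exp (hpos ω ht)).2
      (maxColSum_le_exp_flowIntegral hA hmax hU hUc ht ω))
    hφ fun n ω => (Real.le_log_iff_exp_le (hpos ω n.cast_nonneg)).2
      (hUc.exp_neg_birkhoffSum_le_maxColSum he hφe n ω)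

end CooperativeSystem

theorem exp_neg_lnminus_le {x : ℝ} (hx : 0 < x) : Real.exp (-lnminus x) ≤ x := by
  rw [← Real.le_log_iff_exp_le hx, neg_le]
  exact le_max_left _ _

theorem stmt_18_general {N : ℕ} {Ω : Type*} [MeasurableSpace Ω] (ℙ : Measure Ω)
    [IsProbabilityMeasure ℙ] (θ : ℝ → Ω → Ω) (hθ : IsErgodicFlow θ ℙ)
    (hθjm : Measurable fun p : ℝ × Ω => θ p.1 p.2)
    (A : Ω → Matrix (Fin N) (Fin N) ℝ) (hAmeas : ∀ i j, Measurable fun ω => A ω i j)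
    (hAloc : ∀ ω, ∀ a c : ℝ, IntervalIntegrable (fun t => eopNorm (A (θ t ω))) volume a c)
    (U : Ω → ℝ → Matrix (Fin N) (Fin N) ℝ)
    (hU : ∀ ω, IsFundamentalMatrix (fun s => A (θ s ω)) (U ω))
    (hO1 : ∀ ω i j, i ≠ j → 0 ≤ A ω i j)
    (hO2 : Integrable (fun ω => maxEntryPos (A ω)) ℙ)
    (ebar : Fin N → ℝ) (hebar : 0 < ebar) (ν : Ω → ℝ) (hνpos : ∀ ω, 0 < ν ω)
    (hνint : Integrable (fun ω => lnminus (ν ω)) ℙ)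
    (hstrong : ∀ ω i, ν ω * ebar i ≤ (U ω 1 *ᵥ ebar) i) :
    ∃ lam : ℝ, ∀ᵐ ω ∂ℙ,
      Tendsto (fun t : ℝ => t⁻¹ * Real.log (eopNorm (U ω t))) atTop (nhds lam) := by
  have hA (ω : Ω) (i j : Fin N) (a b : ℝ) :
      IntervalIntegrable (fun s => A (θ s ω) i j) volume a b :=
    (hAloc ω a b).mono_fun'
      ((hAmeas i j).comp (hθjm.comp measurable_prodMk_right)).aestronglyMeasurable
      (.of_forall fun s => abs_apply_le_eopNorm (A (θ s ω)) i j)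
  have hUc : IsNonnegCocycle θ U := isNonnegCocycle_of_isFundamentalMatrix hθ.add hA hO1 hU
  have hstrong' (ω : Ω) : Real.exp (-lnminus (ν ω)) • ebar ≤ U ω 1 *ᵥ ebar := fun i =>
    (mul_le_mul_of_nonneg_right (exp_neg_lnminus_le (hνpos ω)) (hebar.le i)).trans (hstrong ω i)
  obtain ⟨lam, hlam⟩ :=
    exists_ae_tendsto_log_maxColSum_div hθ hθjm hAmeas hA hO2 hU hUc hebar hνint hstrong'
  refine ⟨lam, hlam.mono fun ω hω => ?_⟩
  simp only [inv_mul_eq_div]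
  exact tendsto_div_of_abs_sub_le (fun t ht => abs_log_eopNorm_sub_log_maxColSum_le
    (hUc.nonneg ω ht) (hUc.maxColSum_pos hebar hstrong' ω ht)) hω

/-- Finiteness of the generalized principal Lyapunov exponent for a
random cooperative linear ODE system under the strong positivity condition (B5):
the a.s. constant limit `λ̃₁ = lim (1/t) ln‖U_ω(t)‖` is a (finite) real number. -/
theorem stmt_18 {N : ℕ} (hN : 2 ≤ N)
    {Ω : Type*} [MeasurableSpace Ω] (ℙ : Measure Ω) [IsProbabilityMeasure ℙ]
    [ℙ.IsComplete]
    (θ : ℝ → Ω → Ω) (hθ0 : θ 0 = id)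
    (hθadd : ∀ s t : ℝ, θ (s + t) = θ s ∘ θ t)
    (hθjm : Measurable fun p : ℝ × Ω => θ p.1 p.2)
    (hθmp : ∀ t, MeasurePreserving (θ t) ℙ ℙ)
    (hθerg : ∀ F : Set Ω, MeasurableSet F → (∀ t, θ t ⁻¹' F = F) →
      ℙ F = 0 ∨ ℙ F = 1)
    (A : Ω → Matrix (Fin N) (Fin N) ℝ)
    (hAmeas : ∀ i j, Measurable fun ω => A ω i j)
    (hAloc : ∀ ω, ∀ a c : ℝ,
      IntervalIntegrable (fun t => eopNorm (A (θ t ω))) volume a c)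
    (U : Ω → ℝ → Matrix (Fin N) (Fin N) ℝ)
    (hUcont : ∀ ω (u0 : Fin N → ℝ), Continuous fun t : ℝ => (U ω t).mulVec u0)
    (hUeq : ∀ ω (u0 : Fin N → ℝ) (t : ℝ),
      (U ω t).mulVec u0 = u0 + ∫ s in (0:ℝ)..t, (A (θ s ω)).mulVec ((U ω s).mulVec u0))
    -- (O1) cooperativity
    (hO1 : ∀ ω (i j : Fin N), i ≠ j → 0 ≤ A ω i j)
    -- (O2) integrability
    (hO2 : Integrable (fun ω => ⨆ i, ⨆ j, A ω i j) ℙ)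
    -- strong positivity in one direction (B5)
    (ebar : Fin N → ℝ) (hebar : ∀ i, 0 ≤ ebar i) (hebarn : enorm' ebar = 1)
    (ν : Ω → ℝ) (hνmeas : Measurable ν) (hνpos : ∀ ω, 0 < ν ω)
    (hνint : Integrable (fun ω => lnminus (ν ω)) ℙ)
    (hstrong : ∀ ω i, ν ω * ebar i ≤ (U ω 1).mulVec ebar i) :
    ∃ lam : ℝ, ∀ᵐ ω ∂ℙ,
      Tendsto (fun t : ℝ => t⁻¹ * Real.log (eopNorm (U ω t))) atTop (nhds lam) := by
  have hebar0 : ebar ≠ 0 := fun h => by simp [h, enorm'_zero] at hebarn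
  exact stmt_18_general ℙ θ ⟨hθ0, hθadd, hθmp, hθerg⟩ hθjm A hAmeas hAloc U
    (fun ω u0 => ⟨hUcont ω u0, hUeq ω u0⟩) hO1 hO2.pos_part ebar
    (lt_of_le_of_ne hebar hebar0.symm) ν hνpos hνint hstrong
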